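/- (Proposition: parabolic comparison principle on a goal interval.) Let a < b be real numbers. Let u : [a,b] × 𝒮̄ → ℝ be upper semicontinuous and a viscosity subsolution of max{𝓛[V], V − M[V]} = 0 on [a,b) × 𝒮, and let v : [a,b] × 𝒮̄ → ℝ be lower semicontinuous and a viscosity supersolution of max{𝓛[V], V − M[V]} = 0 on [a,b) × 𝒮. Assume: 0 ≤ u(t,x) ≤ W and −c(1 + |x|^{p₀}) ≤ v(t,x) ≤ W for all (t,x) ∈ [a,b] × 𝒮̄, where W := Σ_{i=k}^K w_i G_i; u(t,(0,0)) ≤ v(t,(0,0)) = W for all t ∈ [a,b]; and u(b,x) ≤ v(b,x) for all x ∈ 𝒮̄. Then u(t,x) ≤ v(t,x) for all (t,x) ∈ [a,b] × 𝒮̄. -/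

import Mathlib

open Set Filter

/-- The closed positive quadrant of portfolio positions. -/
def Sbar : Set (ℝ × ℝ) := Set.Ici 0 ×ˢ Set.Ici 0

/-- The positive quadrant without the origin. -/
def Sset : Set (ℝ × ℝ) := Sbar \ {(0, 0)}

/-- A transaction cost function. -/
def IsCostFn (C : ℝ → ℝ) : Prop :=
  Continuous C ∧ (∀ d₁ d₂ : ℝ, |d₁| ≤ |d₂| → C d₁ ≤ C d₂) ∧ 0 < C 0 ∧
    StrictMono (fun d => d + C d) ∧ Set.Ici (0 : ℝ) ⊆ Set.range (fun d => d + C d)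

/-- The rebalancing map. -/
def Gam (C : ℝ → ℝ) (x : ℝ × ℝ) (d : ℝ) : ℝ × ℝ := (x.1 - d - C d, x.2 + d)

/-- The set of feasible transactions. -/
def Dset (C : ℝ → ℝ) (x : ℝ × ℝ) : Set ℝ := {d | Gam C x d ∈ Sbar}

/-- Intervention operator applied to a time-dependent function
`f : ℝ → ℝ × ℝ → ℝ`, with value `+∞` if no transaction is feasible. -/
noncomputable def MopF (C : ℝ → ℝ) (f : ℝ → ℝ × ℝ → ℝ) (p : ℝ × (ℝ × ℝ)) : EReal :=
  ⨅ d ∈ Dset C p.2, ((f p.1 (Gam C p.2 d) : ℝ) : EReal)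

/-- Upper semicontinuous envelope of `h` computed on `E`. -/
noncomputable def uscEnv {α : Type*} [TopologicalSpace α]
    (h : α → EReal) (E : Set α) (z : α) : EReal :=
  Filter.limsup h (nhdsWithin z E)

/-- Lower semicontinuous envelope of `h` computed on `E`. -/
noncomputable def lscEnv {α : Type*} [TopologicalSpace α]
    (h : α → EReal) (E : Set α) (z : α) : EReal :=
  Filter.liminf h (nhdsWithin z E)

/-- Euclidean norm on `ℝ²`. -/
noncomputable def eunorm (p : ℝ × ℝ) : ℝ := Real.sqrt (p.1 ^ 2 + p.2 ^ 2)

/-- The operator `𝓛[φ](t, x₀, x₁)` of the portfolio dynamics, written in terms of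
classical partial derivatives of the (curried) test function `φ`. -/
noncomputable def gen (r μ σ : ℝ) (φ : ℝ → ℝ → ℝ → ℝ) (t x₀ x₁ : ℝ) : ℝ :=
  -(deriv (fun s => φ s x₀ x₁) t)
    - r * x₀ * deriv (fun y => φ t y x₁) x₀
    - μ * x₁ * deriv (fun y => φ t x₀ y) x₁
    - σ ^ 2 / 2 * x₁ ^ 2 * deriv (deriv (fun y => φ t x₀ y)) x₁

/-- The parabolic interior domain `[a, b) × 𝒮` as a subset of `ℝ × ℝ × ℝ`. -/
def domI (a b : ℝ) : Set (ℝ × ℝ × ℝ) :=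
  {p | a ≤ p.1 ∧ p.1 < b ∧ (p.2.1, p.2.2) ∈ Sset}

/-- A test function is `C²` on an open neighbourhood of `[a, b) × 𝒮`. -/
def IsTest (a b : ℝ) (φ : ℝ → ℝ → ℝ → ℝ) : Prop :=
  ∃ U : Set (ℝ × ℝ × ℝ), IsOpen U ∧ domI a b ⊆ U ∧
    ContDiffOn ℝ 2 (fun p : ℝ × ℝ × ℝ => φ p.1 p.2.1 p.2.2) U

/-- Viscosity subsolution of `max{𝓛[V], V − M[V]} = 0` on `[a, b) × 𝒮`
(for an upper semicontinuous function on `[a, b] × 𝒮̄`; envelopes are computed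
on `[a, b] × 𝒮̄`). -/
def IsViscSubsol (C : ℝ → ℝ) (r μ σ a b : ℝ) (u : ℝ → ℝ × ℝ → ℝ) : Prop :=
  ∀ tb : ℝ, ∀ xb : ℝ × ℝ, tb ∈ Set.Ico a b → xb ∈ Sset →
    ∀ φ : ℝ → ℝ → ℝ → ℝ, IsTest a b φ →
      (∀ t ∈ Set.Ico a b, ∀ x ∈ Sset,
        u t x - φ t x.1 x.2 ≤ u tb xb - φ tb xb.1 xb.2) →
      gen r μ σ φ tb xb.1 xb.2 ≤ 0 ∧
      (u tb xb : EReal) ≤ uscEnv (MopF C u) (Set.Icc a b ×ˢ Sbar) (tb, xb)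

/-- Viscosity supersolution of `max{𝓛[V], V − M[V]} = 0` on `[a, b) × 𝒮`. -/
def IsViscSupersol (C : ℝ → ℝ) (r μ σ a b : ℝ) (v : ℝ → ℝ × ℝ → ℝ) : Prop :=
  ∀ tb : ℝ, ∀ xb : ℝ × ℝ, tb ∈ Set.Ico a b → xb ∈ Sset →
    ∀ φ : ℝ → ℝ → ℝ → ℝ, IsTest a b φ →
      (∀ t ∈ Set.Ico a b, ∀ x ∈ Sset,
        v tb xb - φ tb xb.1 xb.2 ≤ v t x - φ t x.1 x.2) →
      0 ≤ gen r μ σ φ tb xb.1 xb.2 ∨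
      lscEnv (MopF C v) (Set.Icc a b ×ˢ Sbar) (tb, xb) ≤ (v tb xb : EReal)

open Topology

set_option linter.all false

/-- `φ` is C² near `p` with generator value `l`. -/
def Jet (r μ σ : ℝ) (φ : ℝ → ℝ → ℝ → ℝ) (p : ℝ × ℝ × ℝ) (l : ℝ) : Prop :=
  ContDiffAt ℝ 2 (fun q : ℝ × ℝ × ℝ => φ q.1 q.2.1 q.2.2) p ∧
    gen r μ σ φ p.1 p.2.1 p.2.2 = l

lemma gen_eq_of_hasDeriv {r μ σ : ℝ} {φ : ℝ → ℝ → ℝ → ℝ} {t x y A B E : ℝ} {D : ℝ → ℝ}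
    (h1 : HasDerivAt (fun s => φ s x y) A t) (h2 : HasDerivAt (fun z => φ t z y) B x)
    (h3 : ∀ᶠ z in 𝓝 y, HasDerivAt (fun z => φ t x z) (D z) z) (h4 : HasDerivAt D E y) :
    gen r μ σ φ t x y = -A - r * x * B - μ * y * D y - σ ^ 2 / 2 * y ^ 2 * E := by
  have h5 : deriv (fun z => φ t x z) =ᶠ[𝓝 y] D := h3.mono fun z hz => hz.deriv
  unfold gen
  rw [h1.deriv, h2.deriv, h5.deriv_eq, h4.deriv, h3.self_of_nhds.deriv]

lemma slice_t (t x y : ℝ) : ContDiff ℝ 2 (fun s : ℝ => ((s, x, y) : ℝ × ℝ × ℝ)) := by fun_prop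
lemma slice_x (t x y : ℝ) : ContDiff ℝ 2 (fun z : ℝ => ((t, z, y) : ℝ × ℝ × ℝ)) := by fun_prop
lemma slice_y (t x y : ℝ) : ContDiff ℝ 2 (fun z : ℝ => ((t, x, z) : ℝ × ℝ × ℝ)) := by fun_prop

lemma exists_derivs {φ : ℝ → ℝ → ℝ → ℝ} {t x y : ℝ}
    (h : ContDiffAt ℝ 2 (fun q : ℝ × ℝ × ℝ => φ q.1 q.2.1 q.2.2) (t, x, y)) :
    ∃ A B E : ℝ, ∃ D : ℝ → ℝ, HasDerivAt (fun s => φ s x y) A t ∧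
      HasDerivAt (fun z => φ t z y) B x ∧
      (∀ᶠ z in 𝓝 y, HasDerivAt (fun z => φ t x z) (D z) z) ∧ HasDerivAt D E y := by
  have h1 : ContDiffAt ℝ 2 (fun s => φ s x y) t :=
    ContDiffAt.comp (f := fun s : ℝ => ((s, x, y) : ℝ × ℝ × ℝ)) t h (slice_t t x y).contDiffAt
  have h2 : ContDiffAt ℝ 2 (fun z => φ t z y) x :=
    ContDiffAt.comp (f := fun s : ℝ => ((t, s, y) : ℝ × ℝ × ℝ)) x h (slice_x t x y).contDiffAt
  have h3 : ContDiffAt ℝ 2 (fun z => φ t x z) y :=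
    ContDiffAt.comp (f := fun s : ℝ => ((t, x, s) : ℝ × ℝ × ℝ)) y h (slice_y t x y).contDiffAt
  refine ⟨_, _, deriv (deriv (fun z => φ t x z)) y, deriv (fun z => φ t x z), (h1.differentiableAt (by norm_num)).hasDerivAt,
    (h2.differentiableAt (by norm_num)).hasDerivAt, ?_, ?_⟩
  · filter_upwards [h3.eventually (by simp)] with z hz
    exact (hz.differentiableAt (by norm_num)).hasDerivAt
  · have h5 : ContDiffAt ℝ 1 (deriv (fun z => φ t x z)) y := by
      have h6 := h3.fderiv_right (m := 1) (by norm_num)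
      have h7 : deriv (fun z => φ t x z) = fun z => (fderiv ℝ (fun z => φ t x z) z) 1 := by
        ext z; simp
      rw [h7]
      exact h6.clm_apply contDiffAt_const
    exact (h5.differentiableAt (by norm_num)).hasDerivAt

lemma Jet.add {r μ σ : ℝ} {φ ψ : ℝ → ℝ → ℝ → ℝ} {p : ℝ × ℝ × ℝ} {l m : ℝ}
    (h : Jet r μ σ φ p l) (k : Jet r μ σ ψ p m) :
    Jet r μ σ (fun t x y => φ t x y + ψ t x y) p (l + m) := by
  obtain ⟨t, x, y⟩ := p
  refine ⟨h.1.add k.1, ?_⟩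
  obtain ⟨A, B, E, D, a1, a2, a3, a4⟩ := exists_derivs h.1
  obtain ⟨A', B', E', D', b1, b2, b3, b4⟩ := exists_derivs k.1
  have e1 := gen_eq_of_hasDeriv (r := r) (μ := μ) (σ := σ) a1 a2 a3 a4
  have e2 := gen_eq_of_hasDeriv (r := r) (μ := μ) (σ := σ) b1 b2 b3 b4
  have e3 := gen_eq_of_hasDeriv (r := r) (μ := μ) (σ := σ)
    (φ := fun t x y => φ t x y + ψ t x y) (D := fun z => D z + D' z) (a1.add b1) (a2.add b2)
    (a3.mp (b3.mono fun z hb ha => ha.add hb)) (a4.add b4)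
  have e4 := h.2
  have e5 := k.2
  simp only at e4 e5 ⊢
  rw [e3, ← e4, ← e5, e1, e2]; ring

lemma Jet.const_mul {r μ σ : ℝ} {φ : ℝ → ℝ → ℝ → ℝ} {p : ℝ × ℝ × ℝ} {l : ℝ} (c : ℝ)
    (h : Jet r μ σ φ p l) :
    Jet r μ σ (fun t x y => c * φ t x y) p (c * l) := by
  obtain ⟨t, x, y⟩ := p
  refine ⟨contDiffAt_const.mul h.1, ?_⟩
  obtain ⟨A, B, E, D, a1, a2, a3, a4⟩ := exists_derivs h.1
  have e1 := gen_eq_of_hasDeriv (r := r) (μ := μ) (σ := σ) a1 a2 a3 a4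
  have e3 := gen_eq_of_hasDeriv (r := r) (μ := μ) (σ := σ)
    (φ := fun t x y => c * φ t x y) (D := fun z => c * D z) (a1.const_mul c) (a2.const_mul c)
    (a3.mono fun z ha => ha.const_mul c) (a4.const_mul c)
  have e4 := h.2
  simp only at e4 ⊢
  rw [e3, ← e4, e1]; ring

lemma Jet.const {r μ σ : ℝ} {p : ℝ × ℝ × ℝ} (c : ℝ) :
    Jet r μ σ (fun _ _ _ => c) p 0 := by
  refine ⟨contDiffAt_const, ?_⟩
  simp [gen]

lemma Jet.of_hasDeriv {r μ σ : ℝ} {φ : ℝ → ℝ → ℝ → ℝ} {t x y A B E l : ℝ} {D : ℝ → ℝ}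
    (h0 : ContDiffAt ℝ 2 (fun q : ℝ × ℝ × ℝ => φ q.1 q.2.1 q.2.2) (t, x, y))
    (h1 : HasDerivAt (fun s => φ s x y) A t) (h2 : HasDerivAt (fun z => φ t z y) B x)
    (h3 : ∀ᶠ z in 𝓝 y, HasDerivAt (fun z => φ t x z) (D z) z) (h4 : HasDerivAt D E y)
    (hl : -A - r * x * B - μ * y * D y - σ ^ 2 / 2 * y ^ 2 * E = l) :
    Jet r μ σ φ (t, x, y) l := ⟨h0, by rw [← hl]; exact gen_eq_of_hasDeriv h1 h2 h3 h4⟩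

lemma gen_congr {r μ σ : ℝ} {φ ψ : ℝ → ℝ → ℝ → ℝ} {t x y : ℝ}
    (h : ∀ᶠ q in 𝓝 ((t, x, y) : ℝ × ℝ × ℝ), φ q.1 q.2.1 q.2.2 = ψ q.1 q.2.1 q.2.2) :
    gen r μ σ φ t x y = gen r μ σ ψ t x y := by
  have h1 : (fun s => φ s x y) =ᶠ[𝓝 t] (fun s => ψ s x y) :=
    ((slice_t t x y).continuous.tendsto t).eventually h
  have h2 : (fun s => φ t s y) =ᶠ[𝓝 x] (fun s => ψ t s y) :=
    ((slice_x t x y).continuous.tendsto x).eventually h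
  have h3 : (fun s => φ t x s) =ᶠ[𝓝 y] (fun s => ψ t x s) :=
    ((slice_y t x y).continuous.tendsto y).eventually h
  unfold gen
  rw [h1.deriv_eq, h2.deriv_eq, h3.deriv_eq, h3.deriv.deriv_eq]

/-- Extension of a local test function to a global one. -/
lemma ext_test {r μ σ a b : ℝ} {φ M : ℝ → ℝ → ℝ → ℝ} {z : ℝ × ℝ × ℝ}
    (h : ContDiffAt ℝ 2 (fun q : ℝ × ℝ × ℝ => φ q.1 q.2.1 q.2.2) z)
    (hM : ContDiff ℝ 2 (fun q : ℝ × ℝ × ℝ => M q.1 q.2.1 q.2.2))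
    {O : Set (ℝ × ℝ × ℝ)} (hO : O ∈ 𝓝 z) :
    ∃ χ : ℝ × ℝ × ℝ → ℝ, (∀ q, 0 ≤ χ q ∧ χ q ≤ 1) ∧ (∀ q, χ q ≠ 0 → q ∈ O) ∧ χ z = 1 ∧
      IsTest a b (fun t x y => χ (t, x, y) * φ t x y + (1 - χ (t, x, y)) * M t x y) ∧
      gen r μ σ (fun t x y => χ (t, x, y) * φ t x y + (1 - χ (t, x, y)) * M t x y)
        z.1 z.2.1 z.2.2 = gen r μ σ φ z.1 z.2.1 z.2.2 := by
  have h1 := h.eventually (by simp)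
  obtain ⟨R, hR, hball⟩ := Metric.mem_nhds_iff.1 (Filter.inter_mem h1 hO)
  let χ : ContDiffBump z := ⟨R / 3, R / 2, by positivity, by linarith⟩
  refine ⟨χ, fun q => ⟨χ.nonneg, χ.le_one⟩, ?_, ?_, ?_, ?_⟩
  · intro q hq
    have : q ∈ Function.support χ := hq
    rw [χ.support_eq] at this
    exact (hball (Metric.ball_subset_ball (by show R / 2 ≤ R; linarith) this)).2
  · exact χ.one_of_mem_closedBall (Metric.mem_closedBall_self (by show 0 ≤ R / 3; linarith))
  · refine ⟨univ, isOpen_univ, subset_univ _, ?_⟩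
    rw [contDiffOn_univ]
    have hχ : ContDiff ℝ 2 (fun q : ℝ × ℝ × ℝ => χ q) := χ.contDiff
    apply ContDiff.add
    · rw [contDiff_iff_contDiffAt]
      intro q
      by_cases hq : q ∈ tsupport χ
      · rw [χ.tsupport_eq] at hq
        have hq' := (hball (Metric.closedBall_subset_ball (by show R / 2 < R; linarith) hq)).1
        exact hχ.contDiffAt.mul hq'
      · have h0 := notMem_tsupport_iff_eventuallyEq.1 hq
        refine ContDiffAt.congr_of_eventuallyEq (f := fun _ => (0 : ℝ)) contDiffAt_const ?_
        filter_upwards [h0] with q hq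
        have : χ (q.1, q.2.1, q.2.2) = 0 := hq
        simp [this]
    · exact (contDiff_const.sub hχ).mul hM
  · apply gen_congr
    filter_upwards [χ.eventuallyEq_one] with q hq
    have : χ (q.1, q.2.1, q.2.2) = 1 := hq
    simp [this]

lemma sub_local {C : ℝ → ℝ} {r μ σ a b W : ℝ} {u : ℝ → ℝ × ℝ → ℝ}
    (hu : IsViscSubsol C r μ σ a b u)
    (hW : ∀ t ∈ Icc a b, ∀ x ∈ Sbar, u t x ≤ W)
    {z : ℝ × ℝ × ℝ} (hz : z ∈ domI a b) {φ : ℝ → ℝ → ℝ → ℝ} {l : ℝ} (hφ : Jet r μ σ φ z l)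
    (hmax : ∀ᶠ q in 𝓝 z, q ∈ domI a b → u q.1 q.2 - φ q.1 q.2.1 q.2.2 ≤
      u z.1 z.2 - φ z.1 z.2.1 z.2.2) :
    l ≤ 0 ∧ (u z.1 z.2 : EReal) ≤ uscEnv (MopF C u) (Icc a b ×ˢ Sbar) z := by
  set m := u z.1 z.2 - φ z.1 z.2.1 z.2.2 with hm
  obtain ⟨χ, h1, h2, h3, h4, h5⟩ := ext_test (r := r) (μ := μ) (σ := σ) (a := a) (b := b)
    (M := fun _ _ _ => W - m) hφ.1 contDiff_const hmax
  rw [← hφ.2, ← h5]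
  refine hu z.1 z.2 ⟨hz.1, hz.2.1⟩ hz.2.2 _ h4 ?_
  intro t ht x hx
  have e : χ (z.1, z.2.1, z.2.2) = 1 := h3
  simp only [e]
  have b1 := h1 (t, x.1, x.2)
  have b2 := hW t ⟨ht.1, ht.2.le⟩ x hx.1
  by_cases hc : χ (t, x.1, x.2) = 0
  · rw [hc]; linarith
  · have b3 := h2 _ hc ⟨ht.1, ht.2, hx⟩
    have b4 : u t x - φ t x.1 x.2 ≤ m := b3
    have := mul_le_mul_of_nonneg_left b4 b1.1
    have := mul_le_mul_of_nonneg_left (show u t x - (W - m) ≤ m by linarith)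
      (sub_nonneg.2 b1.2)
    nlinarith

lemma super_local {C : ℝ → ℝ} {r μ σ a b L : ℝ} {v : ℝ → ℝ × ℝ → ℝ}
    (hv : IsViscSupersol C r μ σ a b v)
    (hL : ∀ t ∈ Icc a b, ∀ x ∈ Sbar, -(L * (1 + x.1 + x.2)) ≤ v t x)
    {z : ℝ × ℝ × ℝ} (hz : z ∈ domI a b) {φ : ℝ → ℝ → ℝ → ℝ} {l : ℝ} (hφ : Jet r μ σ φ z l)
    (hmax : ∀ᶠ q in 𝓝 z, q ∈ domI a b → 
      v z.1 z.2 - φ z.1 z.2.1 z.2.2 ≤ v q.1 q.2 - φ q.1 q.2.1 q.2.2) :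
    0 ≤ l ∨ lscEnv (MopF C v) (Icc a b ×ˢ Sbar) z ≤ (v z.1 z.2 : EReal) := by
  set m := v z.1 z.2 - φ z.1 z.2.1 z.2.2 with hm
  obtain ⟨χ, h1, h2, h3, h4, h5⟩ := ext_test (r := r) (μ := μ) (σ := σ) (a := a) (b := b)
    (M := fun _ x y => -(L * (1 + x + y)) - m) hφ.1 (by fun_prop) hmax
  rw [← hφ.2, ← h5]
  refine hv z.1 z.2 ⟨hz.1, hz.2.1⟩ hz.2.2 _ h4 ?_
  intro t ht x hx
  have e : χ (z.1, z.2.1, z.2.2) = 1 := h3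
  simp only [e]
  have b1 := h1 (t, x.1, x.2)
  have b2 := hL t ⟨ht.1, ht.2.le⟩ x hx.1
  by_cases hc : χ (t, x.1, x.2) = 0
  · rw [hc]; linarith
  · have b3 := h2 _ hc ⟨ht.1, ht.2, hx⟩
    have b4 : m ≤ v t x - φ t x.1 x.2 := b3
    have := mul_le_mul_of_nonneg_left b4 b1.1
    have := mul_le_mul_of_nonneg_left
      (show m ≤ v t x - (-(L * (1 + x.1 + x.2)) - m) by linarith)
      (sub_nonneg.2 b1.2)
    nlinarith

lemma pen_lemma {X : Type*} [TopologicalSpace X] {K : Set X} (hK : IsCompact K) {f P : X → ℝ}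
    (hf : UpperSemicontinuousOn f K) (hP : ContinuousOn P K) (hP0 : ∀ z ∈ K, 0 ≤ P z)
    (h : ∀ z ∈ K, P z = 0 → f z < 0) : ∃ N : ℝ, 0 ≤ N ∧ ∀ z ∈ K, f z < N * P z := by
  have := hK.induction_on (p := fun s => ∃ N : ℝ, 0 ≤ N ∧ ∀ z ∈ s ∩ K, f z < N * P z)
    ⟨0, le_rfl, by simp⟩
    (fun s t hst ⟨N, h0, hN⟩ => ⟨N, h0, fun z hz => hN z ⟨hst hz.1, hz.2⟩⟩)
    (fun s t ⟨N, h0, hN⟩ ⟨N', h0', hN'⟩ => ⟨max N N', le_max_of_le_left h0, fun z hz => by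
      rcases hz.1 with h1 | h1
      · exact (hN z ⟨h1, hz.2⟩).trans_le
          (mul_le_mul_of_nonneg_right (le_max_left _ _) (hP0 z hz.2))
      · exact (hN' z ⟨h1, hz.2⟩).trans_le
          (mul_le_mul_of_nonneg_right (le_max_right _ _) (hP0 z hz.2))⟩)
    (fun x hx => by
      rcases (hP0 x hx).eq_or_lt with h0 | h0
      · have h1 := hf x hx 0 (h x hx h0.symm)
        refine ⟨{z | f z < 0}, h1, 0, le_rfl, fun z hz => ?_⟩
        simpa using hz.1
      · have h1 := hf x hx (f x + 1) (by linarith)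
        set N := (|f x| + 2) / P x
        have hN : 0 ≤ N := by positivity
        have h2 : ∀ᶠ z in 𝓝[K] x, f x + 1 < N * P z := by
          have h3 : Tendsto (fun z => N * P z) (𝓝[K] x) (𝓝 (N * P x)) :=
            (hP x hx).tendsto.const_mul N
          apply h3.eventually_const_lt
          have : N * P x = |f x| + 2 := by simp only [N]; field_simp
          rw [this]; linarith [le_abs_self (f x)]
        exact ⟨_, h1.and h2, N, hN, fun z hz => lt_trans hz.1.1 hz.1.2⟩)
  obtain ⟨N, h0, hN⟩ := this
  exact ⟨N, h0, fun z hz => hN z ⟨hz, hz⟩⟩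

lemma domI_sub {a b : ℝ} : domI a b ⊆ Icc a b ×ˢ Sbar :=
  fun z hz => ⟨⟨hz.1, hz.2.1.le⟩, hz.2.2.1⟩

lemma jet_contOn {r μ σ : ℝ} {H : ℝ → ℝ → ℝ → ℝ} {K : Set (ℝ × ℝ × ℝ)} {q : ℝ → Prop}
    (hH : ∀ z ∈ K, ∃ l, q l ∧ Jet r μ σ H z l) :
    ContinuousOn (fun z : ℝ × ℝ × ℝ => H z.1 z.2.1 z.2.2) K := fun z hz => by
  obtain ⟨l, _, h⟩ := hH z hz
  exact h.1.continuousAt.continuousWithinAt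

lemma core_sub {C : ℝ → ℝ} {r μ σ a b W : ℝ} {u : ℝ → ℝ × ℝ → ℝ}
    (hu : IsViscSubsol C r μ σ a b u)
    (hW : ∀ t ∈ Icc a b, ∀ x ∈ Sbar, u t x ≤ W)
    (hu_usc : UpperSemicontinuousOn (fun p : ℝ × (ℝ × ℝ) => u p.1 p.2) (Icc a b ×ˢ Sbar))
    {K Kb : Set (ℝ × ℝ × ℝ)} (hK : IsCompact K) (hKb : IsCompact Kb) (hKbK : Kb ⊆ K)
    (hKD : K ⊆ domI a b)
    (hopen : ∀ z ∈ K, z ∉ Kb → ∀ᶠ q in 𝓝 z, q ∈ domI a b → q ∈ K)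
    {H P : ℝ → ℝ → ℝ → ℝ}
    (hH : ∀ z ∈ K, ∃ l, 0 < l ∧ Jet r μ σ H z l)
    (hP : ∀ z ∈ K, ∃ l, 0 ≤ l ∧ Jet r μ σ P z l)
    (hP0 : ∀ z ∈ K, 0 ≤ P z.1 z.2.1 z.2.2)
    (hbd : ∀ z ∈ Kb, P z.1 z.2.1 z.2.2 = 0 → u z.1 z.2 < H z.1 z.2.1 z.2.2) :
    ∀ z ∈ K, P z.1 z.2.1 z.2.2 = 0 → u z.1 z.2 ≤ H z.1 z.2.1 z.2.2 := by
  have hcH := jet_contOn hH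
  have hcP := jet_contOn hP
  have hu' := hu_usc.mono (hKD.trans domI_sub)
  have hf : UpperSemicontinuousOn
      (fun z : ℝ × ℝ × ℝ => u z.1 z.2 + -(H z.1 z.2.1 z.2.2)) K :=
    hu'.add (hcH.neg.upperSemicontinuousOn)
  obtain ⟨N, hN0, hN⟩ := pen_lemma hKb (hf.mono hKbK) (hcP.mono hKbK)
    (fun z hz => hP0 z (hKbK hz)) (fun z hz h0 => by have := hbd z hz h0; linarith)
  by_contra! hcon
  obtain ⟨z₁, hz₁, hz₁0, hlt⟩ := hcon
  have hf2 : UpperSemicontinuousOn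
      (fun z : ℝ × ℝ × ℝ => (u z.1 z.2 + -(H z.1 z.2.1 z.2.2)) + -(N * P z.1 z.2.1 z.2.2)) K :=
    hf.add ((continuousOn_const.mul hcP).neg.upperSemicontinuousOn)
  obtain ⟨z, hz, hmax⟩ := hf2.exists_isMaxOn ⟨z₁, hz₁⟩ hK
  have hm : ∀ q ∈ K, (u q.1 q.2 + -(H q.1 q.2.1 q.2.2)) + -(N * P q.1 q.2.1 q.2.2) ≤
    (u z.1 z.2 + -(H z.1 z.2.1 z.2.2)) + -(N * P z.1 z.2.1 z.2.2) := fun q hq => hmax hq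
  have hpos := hm z₁ hz₁
  rw [hz₁0] at hpos
  have hzb : z ∉ Kb := fun hzb => by have := hN z hzb; linarith
  obtain ⟨l, hl, hJ⟩ := hH z hz
  obtain ⟨l', hl', hJ'⟩ := hP z hz
  have := sub_local hu hW (hKD hz) (hJ.add (hJ'.const_mul N)) (by
    filter_upwards [hopen z hz hzb] with q hq hqd
    have := hm q (hq hqd)
    linarith)
  have h2 := mul_nonneg hN0 hl'
  linarith [this.1]

lemma core_super {C : ℝ → ℝ} {r μ σ a b L : ℝ} {v : ℝ → ℝ × ℝ → ℝ}
    (hv : IsViscSupersol C r μ σ a b v)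
    (hL : ∀ t ∈ Icc a b, ∀ x ∈ Sbar, -(L * (1 + x.1 + x.2)) ≤ v t x)
    (hv_lsc : LowerSemicontinuousOn (fun p : ℝ × (ℝ × ℝ) => v p.1 p.2) (Icc a b ×ˢ Sbar))
    {K Kb : Set (ℝ × ℝ × ℝ)} (hK : IsCompact K) (hKb : IsCompact Kb) (hKbK : Kb ⊆ K)
    (hKD : K ⊆ domI a b)
    (hopen : ∀ z ∈ K, z ∉ Kb → ∀ᶠ q in 𝓝 z, q ∈ domI a b → q ∈ K)
    {H P : ℝ → ℝ → ℝ → ℝ}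
    (hH : ∀ z ∈ K, ∃ l, l < 0 ∧ Jet r μ σ H z l)
    (hP : ∀ z ∈ K, ∃ l, 0 ≤ l ∧ Jet r μ σ P z l)
    (hP0 : ∀ z ∈ K, 0 ≤ P z.1 z.2.1 z.2.2)
    (himp : ∀ z ∈ K, v z.1 z.2 < H z.1 z.2.1 z.2.2 →
      (v z.1 z.2 : EReal) < lscEnv (MopF C v) (Icc a b ×ˢ Sbar) z)
    (hbd : ∀ z ∈ Kb, P z.1 z.2.1 z.2.2 = 0 → H z.1 z.2.1 z.2.2 < v z.1 z.2) :
    ∀ z ∈ K, P z.1 z.2.1 z.2.2 = 0 → H z.1 z.2.1 z.2.2 ≤ v z.1 z.2 := by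
  have hcH := jet_contOn hH
  have hcP := jet_contOn hP
  have hv' : UpperSemicontinuousOn (fun p : ℝ × (ℝ × ℝ) => -v p.1 p.2) K := by
    have := continuous_neg.comp_lowerSemicontinuousOn_antitone
      (hv_lsc.mono (hKD.trans domI_sub)) (fun x y h => neg_le_neg h)
    exact this
  have hf : UpperSemicontinuousOn
      (fun z : ℝ × ℝ × ℝ => -v z.1 z.2 + H z.1 z.2.1 z.2.2) K :=
    hv'.add (hcH.upperSemicontinuousOn)
  obtain ⟨N, hN0, hN⟩ := pen_lemma hKb (hf.mono hKbK) (hcP.mono hKbK)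
    (fun z hz => hP0 z (hKbK hz)) (fun z hz h0 => by have := hbd z hz h0; linarith)
  by_contra! hcon
  obtain ⟨z₁, hz₁, hz₁0, hlt⟩ := hcon
  have hf2 : UpperSemicontinuousOn
      (fun z : ℝ × ℝ × ℝ => (-v z.1 z.2 + H z.1 z.2.1 z.2.2) + -(N * P z.1 z.2.1 z.2.2)) K :=
    hf.add ((continuousOn_const.mul hcP).neg.upperSemicontinuousOn)
  obtain ⟨z, hz, hmax⟩ := hf2.exists_isMaxOn ⟨z₁, hz₁⟩ hK
  have hm : ∀ q ∈ K, (-v q.1 q.2 + H q.1 q.2.1 q.2.2) + -(N * P q.1 q.2.1 q.2.2) ≤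
    (-v z.1 z.2 + (H z.1 z.2.1 z.2.2)) + -(N * P z.1 z.2.1 z.2.2) := fun q hq => hmax hq
  have hpos := hm z₁ hz₁
  rw [hz₁0] at hpos
  have hzb : z ∉ Kb := fun hzb => by have := hN z hzb; linarith
  obtain ⟨l, hl, hJ⟩ := hH z hz
  obtain ⟨l', hl', hJ'⟩ := hP z hz
  have h3 := mul_nonneg hN0 (hP0 z hz)
  rcases super_local hv hL (hKD hz) (hJ.add (hJ'.const_mul (-N))) (by
    filter_upwards [hopen z hz hzb] with q hq hqd
    have := hm q (hq hqd)
    linarith) with h4 | h4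
  · have h2 := mul_nonneg hN0 hl'
    linarith
  · exact absurd h4 (not_le.2 (himp z hz (by linarith)))

/-- The subsolution always satisfies the obstacle inequality. -/
lemma sub_obstacle {C : ℝ → ℝ} {r μ σ a b W : ℝ} {u : ℝ → ℝ × ℝ → ℝ}
    (hu : IsViscSubsol C r μ σ a b u)
    (hW : ∀ t ∈ Icc a b, ∀ x ∈ Sbar, u t x ≤ W)
    (hu_usc : UpperSemicontinuousOn (fun p : ℝ × (ℝ × ℝ) => u p.1 p.2) (Icc a b ×ˢ Sbar))
    {K : Set (ℝ × ℝ × ℝ)} (hK : IsCompact K)  (hKD : K ⊆ domI a b)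
    {z₀ : ℝ × ℝ × ℝ} (hz₀ : z₀ ∈ K) {ρ : ℝ} (hρ : 0 < ρ)
    (hopen : ∀ q ∈ domI a b, dist q z₀ < ρ → q ∈ K) :
    (u z₀.1 z₀.2 : EReal) ≤ uscEnv (MopF C u) (Icc a b ×ˢ Sbar) z₀ := by
  by_contra! hcon
  obtain ⟨y, hy1, hy2⟩ := EReal.lt_iff_exists_real_btwn.1 hcon
  have h1 : ∀ᶠ q in 𝓝[Icc a b ×ˢ Sbar] z₀, MopF C u q < y :=
    Filter.eventually_lt_of_limsup_lt hy1
  rw [eventually_nhdsWithin_iff] at h1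
  obtain ⟨R, hR, hball⟩ := Metric.mem_nhds_iff.1 h1.eventually_nhds
  set φ : ℝ → ℝ → ℝ → ℝ := fun t x y => (t - z₀.1) ^ 2 + (x - z₀.2.1) ^ 2 + (y - z₀.2.2) ^ 2
  have hφc : ContDiff ℝ 2 (fun q : ℝ × ℝ × ℝ => φ q.1 q.2.1 q.2.2) := by
    simp only [φ]; fun_prop
  have hφ0 : ∀ z : ℝ × ℝ × ℝ, φ z.1 z.2.1 z.2.2 = 0 → z = z₀ := by
    intro z hz
    simp only [φ] at hz
    have e1 : (z.1 - z₀.1) = 0 := by nlinarith [sq_nonneg (z.1 - z₀.1), sq_nonneg (z.2.1 - z₀.2.1), sq_nonneg (z.2.2 - z₀.2.2)]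
    have e2 : (z.2.1 - z₀.2.1) = 0 := by nlinarith [sq_nonneg (z.1 - z₀.1), sq_nonneg (z.2.1 - z₀.2.1), sq_nonneg (z.2.2 - z₀.2.2)]
    have e3 : (z.2.2 - z₀.2.2) = 0 := by nlinarith [sq_nonneg (z.1 - z₀.1), sq_nonneg (z.2.1 - z₀.2.1), sq_nonneg (z.2.2 - z₀.2.2)]
    ext <;> linarith
  set δ := min ρ R
  have hδ : 0 < δ := lt_min hρ hR
  set Kb := K ∩ (Metric.ball z₀ δ)ᶜ
  have hKb : IsCompact Kb := hK.inter_right Metric.isOpen_ball.isClosed_compl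
  have hu' := hu_usc.mono (hKD.trans domI_sub)
  have hf : UpperSemicontinuousOn
      (fun z : ℝ × ℝ × ℝ => u z.1 z.2 + -(u z₀.1 z₀.2)) K :=
    hu'.add (continuousOn_const.upperSemicontinuousOn)
  obtain ⟨N, hN0, hN⟩ := pen_lemma hKb (hf.mono inter_subset_left) hφc.continuous.continuousOn
    (fun z hz => by simp only [φ]; positivity) (fun z hz h0 => by
      rw [hφ0 z h0] at hz
      exact absurd (Metric.mem_ball_self hδ) hz.2)
  have hf2 : UpperSemicontinuousOn
      (fun z : ℝ × ℝ × ℝ => (u z.1 z.2 + -(u z₀.1 z₀.2)) + -(N * φ z.1 z.2.1 z.2.2)) K :=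
    hf.add ((continuousOn_const.mul hφc.continuous.continuousOn).neg.upperSemicontinuousOn)
  obtain ⟨z, hz, hmax⟩ := hf2.exists_isMaxOn ⟨z₀, hz₀⟩ hK
  have hm : ∀ q ∈ K, (u q.1 q.2 + -(u z₀.1 z₀.2)) + -(N * φ q.1 q.2.1 q.2.2) ≤
     (u z.1 z.2 + -(u z₀.1 z₀.2)) + -(N * φ z.1 z.2.1 z.2.2) := fun q hq => hmax hq
  have hpos := hm z₀ hz₀
  have e0 : φ z₀.1 z₀.2.1 z₀.2.2 = 0 := by simp [φ]
  rw [e0] at hpos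
  have hzb : z ∈ Metric.ball z₀ δ := by
    by_contra h
    have := hN z ⟨hz, h⟩
    linarith
  have hz1 : dist z z₀ < ρ := lt_of_lt_of_le hzb (min_le_left _ _)
  have hz2 : z ∈ Metric.ball z₀ R := Metric.ball_subset_ball (min_le_right _ _) hzb
  have h5 : Jet r μ σ (fun t x y => N * φ t x y) z _ := ⟨(contDiff_const.mul hφc).contDiffAt, rfl⟩
  have h6 := (sub_local hu hW (hKD hz) h5 (by
    filter_upwards [Metric.isOpen_ball.mem_nhds hzb] with q hq hqd
    have := hm q (hopen q hqd (lt_of_lt_of_le hq (min_le_left _ _)))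
    linarith)).2
  have h7 : uscEnv (MopF C u) (Icc a b ×ˢ Sbar) z ≤ y := by
    refine Filter.limsup_le_of_le (by isBoundedDefault) ?_
    rw [eventually_nhdsWithin_iff]
    have := hball hz2
    exact this.mono fun q hq hqE => (hq hqE).le
  have h8 : u z₀.1 z₀.2 ≤ u z.1 z.2 := by
    have : 0 ≤ N * φ z.1 z.2.1 z.2.2 := mul_nonneg hN0 (by simp only [φ]; positivity)
    linarith
  have h9 : (u z₀.1 z₀.2 : EReal) ≤ u z.1 z.2 := by exact_mod_cast h8
  exact absurd (hy2.trans_le (h9.trans (h6.trans h7))) (lt_irrefl _)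

lemma Gam_cont {C : ℝ → ℝ} (hC : Continuous C) :
    Continuous (fun p : (ℝ × ℝ) × ℝ => Gam C p.1 p.2) := by
  unfold Gam; fun_prop

lemma Sbar_closed : IsClosed Sbar := isClosed_Ici.prod isClosed_Ici

lemma C_pos {C : ℝ → ℝ} (hC : IsCostFn C) (d : ℝ) : 0 < C d :=
  lt_of_lt_of_le hC.2.2.1 (hC.2.1 0 d (by simp))

lemma super_imp {C : ℝ → ℝ} (hC : IsCostFn C) {a b : ℝ} {v : ℝ → ℝ × ℝ → ℝ}
    (hv_lsc : LowerSemicontinuousOn (fun p : ℝ × (ℝ × ℝ) => v p.1 p.2) (Icc a b ×ˢ Sbar))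
    {z : ℝ × ℝ × ℝ} (hz : z ∈ Icc a b ×ˢ Sbar)
    (h : lscEnv (MopF C v) (Icc a b ×ˢ Sbar) z ≤ (v z.1 z.2 : EReal)) :
    ∃ d ∈ Dset C z.2, v z.1 (Gam C z.2 d) ≤ v z.1 z.2 := by
  have h1 : ∀ n : ℕ, ∃ q ∈ Icc a b ×ˢ Sbar, dist q z < 1 / ((n : ℝ) + 1) ∧
      ∃ d ∈ Dset C q.2, v q.1 (Gam C q.2 d) < v z.1 z.2 + 1 / ((n : ℝ) + 1) := by
    intro n
    have hn : (0 : ℝ) < 1 / ((n : ℝ) + 1) := by positivity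
    have hlt : Filter.liminf (MopF C v) (𝓝[Icc a b ×ˢ Sbar] z) <
        ((v z.1 z.2 + 1 / ((n : ℝ) + 1) : ℝ) : EReal) :=
      lt_of_le_of_lt h (EReal.coe_lt_coe_iff.2 (by linarith))
    have hf := Filter.frequently_lt_of_liminf_lt (by isBoundedDefault) hlt
    have he : ∀ᶠ q in 𝓝[Icc a b ×ˢ Sbar] z, q ∈ Icc a b ×ˢ Sbar ∧ dist q z < 1 / ((n : ℝ) + 1) :=
      (eventually_mem_nhdsWithin).and
        (mem_nhdsWithin_of_mem_nhds (Metric.ball_mem_nhds z hn))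
    obtain ⟨q, hq1, hq2, hq3⟩ := (hf.and_eventually he).exists
    refine ⟨q, hq2, hq3, ?_⟩
    unfold MopF at hq1
    simp only [iInf_lt_iff] at hq1
    obtain ⟨d, hd, hlt⟩ := hq1
    exact ⟨d, hd, by exact_mod_cast hlt⟩
  choose q hqE hqd d hd hvd using h1
  have hlim0 : Tendsto (fun n : ℕ => 1 / ((n : ℝ) + 1)) atTop (𝓝 0) :=
    tendsto_one_div_add_atTop_nhds_zero_nat
  have hq : Tendsto q atTop (𝓝 z) := by
    rw [tendsto_iff_dist_tendsto_zero]
    exact squeeze_zero (fun _ => dist_nonneg) (fun n => (hqd n).le) hlim0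
  have hdb : ∀ n, d n ∈ Icc (-(z.2.2 + 1)) (z.2.1 + 1) := by
    intro n
    have h1 : dist (q n) z < 1 := lt_of_lt_of_le (hqd n) (by
      rw [div_le_one (by positivity)]; linarith [(Nat.cast_nonneg n : (0:ℝ) ≤ n)])
    rw [Prod.dist_eq, Prod.dist_eq, max_lt_iff, max_lt_iff, Real.dist_eq, Real.dist_eq,
      Real.dist_eq, abs_lt, abs_lt, abs_lt] at h1
    have h2 : 0 ≤ (q n).2.1 - d n - C (d n) := (hd n).1
    have h3 : 0 ≤ (q n).2.2 + d n := (hd n).2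
    have := C_pos hC (d n)
    constructor <;> linarith
  obtain ⟨d₀, _, φ, hφ, hlim⟩ := isCompact_Icc.tendsto_subseq hdb
  have hq' := hq.comp hφ.tendsto_atTop
  have hG : Tendsto (fun n => Gam C (q (φ n)).2 (d (φ n))) atTop (𝓝 (Gam C z.2 d₀)) := by
    have := ((Gam_cont hC.1).tendsto (z.2, d₀)).comp
      (((continuous_snd.tendsto z).comp hq').prodMk_nhds hlim)
    exact this
  have hGS : Gam C z.2 d₀ ∈ Sbar :=
    Sbar_closed.mem_of_tendsto hG (Eventually.of_forall fun n => hd (φ n))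
  refine ⟨d₀, hGS, ?_⟩
  have hT : Tendsto (fun n => ((q (φ n)).1, Gam C (q (φ n)).2 (d (φ n)))) atTop
      (𝓝[Icc a b ×ˢ Sbar] (z.1, Gam C z.2 d₀)) := by
    rw [tendsto_nhdsWithin_iff]
    exact ⟨((continuous_fst.tendsto z).comp hq').prodMk_nhds hG,
      Eventually.of_forall fun n => ⟨(hqE (φ n)).1, hd (φ n)⟩⟩
  refine le_of_forall_lt fun y hy => ?_
  obtain ⟨y', hy1, hy2⟩ := exists_between hy
  have h3 := hT.eventually (hv_lsc (z.1, Gam C z.2 d₀) ⟨hz.1, hGS⟩ y' hy2)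
  have h4 : Tendsto (fun n => v z.1 z.2 + 1 / ((φ n : ℝ) + 1)) atTop (𝓝 (v z.1 z.2 + 0)) :=
    (hlim0.comp hφ.tendsto_atTop).const_add _
  rw [add_zero] at h4
  have h5 : y' ≤ v z.1 z.2 := ge_of_tendsto h4 (h3.mono fun n hn => (lt_trans hn (hvd (φ n))).le)
  linarith

lemma sub_imp {C : ℝ → ℝ} (hC : IsCostFn C) {a b : ℝ} {u : ℝ → ℝ × ℝ → ℝ}
    (hu_usc : UpperSemicontinuousOn (fun p : ℝ × (ℝ × ℝ) => u p.1 p.2) (Icc a b ×ˢ Sbar))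
    {z : ℝ × ℝ × ℝ} (hz : z ∈ Icc a b ×ˢ Sbar) {d : ℝ} (hd : d ∈ Dset C z.2)
    (hne : Gam C z.2 d ≠ (0, 0)) :
    uscEnv (MopF C u) (Icc a b ×ˢ Sbar) z ≤ (u z.1 (Gam C z.2 d) : EReal) := by
  refine le_of_forall_gt_imp_ge_of_dense fun y hy => ?_
  obtain ⟨y', hy1, hy2⟩ := EReal.lt_iff_exists_real_btwn.1 hy
  refine le_trans ?_ hy2.le
  have h1 := hu_usc (z.1, Gam C z.2 d) ⟨hz.1, hd⟩ y' (by exact_mod_cast hy1)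
  rw [eventually_nhdsWithin_iff] at h1
  have hcont : Continuous (fun p : (ℝ × ℝ × ℝ) × ℝ => ((p.1.1, Gam C p.1.2 p.2) : ℝ × ℝ × ℝ)) := by
    have := Gam_cont hC.1
    exact (by fun_prop : Continuous fun p : (ℝ × ℝ × ℝ) × ℝ => p.1.1).prodMk
      (this.comp (by fun_prop : Continuous fun p : (ℝ × ℝ × ℝ) × ℝ => (p.1.2, p.2)))
  have h2 := (hcont.tendsto (z, d)).eventually h1
  -- it suffices to find, near z, feasible transactions near d
  have key : ∀ᶠ q in 𝓝 z, q ∈ Icc a b ×ˢ Sbar → ∃ d', d' ∈ Dset C q.2 ∧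
      u q.1 (Gam C q.2 d') < y' := by
    have hy0 : 0 ≤ z.2.1 - d - C d := hd.1
    have hy1 : 0 ≤ z.2.2 + d := hd.2
    rcases hy1.eq_or_lt with h0 | h0
    · have hpos : 0 < z.2.1 - d - C d := by
        rcases hy0.eq_or_lt with h | h
        · exact absurd (by simp [Gam, ← h, ← h0]) hne
        · exact h
      have hdz : d = -z.2.2 := by linarith
      have hCc := hC.1
      have hT : Tendsto (fun q : ℝ × ℝ × ℝ => (q, -q.2.2)) (𝓝 z) (𝓝 (z, d)) := by
        rw [hdz]
        exact (by fun_prop : Continuous fun q : ℝ × ℝ × ℝ => (q, -q.2.2)).tendsto z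
      have hT2 : Tendsto (fun q : ℝ × ℝ × ℝ => q.2.1 - (-q.2.2) - C (-q.2.2)) (𝓝 z)
          (𝓝 (z.2.1 - d - C d)) := by
        rw [hdz]
        exact (by fun_prop :
          Continuous fun q : ℝ × ℝ × ℝ => q.2.1 - (-q.2.2) - C (-q.2.2)).tendsto z
      filter_upwards [hT.eventually h2, hT2.eventually_const_lt hpos] with q hq1 hq2 hqE
      have hD : -q.2.2 ∈ Dset C q.2 := ⟨hq2.le, by simp [Gam]⟩
      exact ⟨-q.2.2, hD, hq1 ⟨hqE.1, hD⟩⟩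
    · have h3 := h2.curry_nhds
      rw [eventually_nhds_iff] at h2
      obtain ⟨O, hO, hOo, hOz⟩ := h2
      have hT : Tendsto (fun d' : ℝ => (z, d')) (𝓝[<] d) (𝓝 (z, d)) :=
        ((by fun_prop : Continuous fun d' : ℝ => (z, d')).tendsto d).mono_left
          nhdsWithin_le_nhds
      have hT2 : Tendsto (fun d' : ℝ => z.2.2 + d') (𝓝[<] d) (𝓝 (z.2.2 + d)) :=
        ((by fun_prop : Continuous fun d' : ℝ => z.2.2 + d').tendsto d).mono_left
          nhdsWithin_le_nhds
      obtain ⟨d', ⟨hd1, hd2⟩, hd3⟩ := ((hT.eventually (hOo.mem_nhds hOz)).and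
        (hT2.eventually_const_lt h0)).and self_mem_nhdsWithin |>.exists
      have hd3' : d' + C d' < d + C d := hC.2.2.2.1 hd3
      have hCc := hC.1
      have e1 : ∀ᶠ q : ℝ × ℝ × ℝ in 𝓝 z, (q, d') ∈ O :=
        (by fun_prop : Continuous fun q : ℝ × ℝ × ℝ => (q, d')).tendsto z |>.eventually
          (hOo.mem_nhds hd1)
      have e2 : ∀ᶠ q : ℝ × ℝ × ℝ in 𝓝 z, 0 < q.2.2 + d' :=
        ((by fun_prop : Continuous fun q : ℝ × ℝ × ℝ => q.2.2 + d').tendsto z).eventually_const_lt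
          hd2
      have e3 : ∀ᶠ q : ℝ × ℝ × ℝ in 𝓝 z, 0 < q.2.1 - d' - C d' :=
        ((by fun_prop : Continuous fun q : ℝ × ℝ × ℝ => q.2.1 - d' - C d').tendsto
          z).eventually_const_lt (by linarith)
      filter_upwards [e1, e2, e3] with q h1 h2 h3 hqE
      have hD : d' ∈ Dset C q.2 := ⟨h3.le, h2.le⟩
      exact ⟨d', hD, hO _ h1 ⟨hqE.1, hD⟩⟩
  refine Filter.limsup_le_of_le (by isBoundedDefault) ?_
  rw [eventually_nhdsWithin_iff]
  filter_upwards [key] with q hq hqE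
  obtain ⟨d', hd', hlt⟩ := hq hqE
  refine le_trans (iInf₂_le d' hd') ?_
  exact_mod_cast hlt.le

lemma cos_span_mul (f : ℝ → ℝ)
    (hf : f ∈ Submodule.span ℝ (range fun (k : ℕ) (θ : ℝ) => Real.cos (k * θ))) :
    (fun θ => f θ * Real.cos θ) ∈
      Submodule.span ℝ (range fun (k : ℕ) (θ : ℝ) => Real.cos (k * θ)) := by
  induction hf using Submodule.span_induction with
  | mem x hx =>
    obtain ⟨k, rfl⟩ := hx
    rcases k with _ | k
    · refine Submodule.subset_span ⟨1, ?_⟩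
      ext θ; simp
    · have : (fun θ : ℝ => Real.cos (((k + 1 : ℕ) : ℝ) * θ) * Real.cos θ) =
          (1 / 2 : ℝ) • (fun θ : ℝ => Real.cos (((k + 2 : ℕ) : ℝ) * θ)) +
          (1 / 2 : ℝ) • (fun θ : ℝ => Real.cos ((k : ℝ) * θ)) := by
        ext θ
        simp only [Pi.add_apply, Pi.smul_apply, smul_eq_mul]
        have e1 : ((k + 2 : ℕ) : ℝ) * θ = ((k + 1 : ℕ) : ℝ) * θ + θ := by push_cast; ring
        have e2 : (k : ℝ) * θ = ((k + 1 : ℕ) : ℝ) * θ - θ := by push_cast; ring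
        rw [e1, e2, Real.cos_add, Real.cos_sub]; ring
      rw [this]
      exact Submodule.add_mem _ (Submodule.smul_mem _ _ (Submodule.subset_span ⟨k + 2, rfl⟩))
        (Submodule.smul_mem _ _ (Submodule.subset_span ⟨k, rfl⟩))
  | zero => simp; exact Submodule.zero_mem _
  | add x y _ _ hx hy =>
    have : (fun θ => (x + y) θ * Real.cos θ) =
      (fun θ => x θ * Real.cos θ) + (fun θ => y θ * Real.cos θ) := by
      ext θ; simp [add_mul]
    rw [this]; exact Submodule.add_mem _ hx hy
  | smul a x _ hx =>
    have : (fun θ => (a • x) θ * Real.cos θ) = a • (fun θ => x θ * Real.cos θ) := by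
      ext θ; simp [mul_assoc]
    rw [this]; exact Submodule.smul_mem _ _ hx

lemma poly_cos (p : Polynomial ℝ) :
    (fun θ => p.eval (Real.cos θ)) ∈
      Submodule.span ℝ (range fun (k : ℕ) (θ : ℝ) => Real.cos (k * θ)) := by
  induction p using Polynomial.induction_on with
  | C a =>
    have : (fun θ : ℝ => (Polynomial.C a).eval (Real.cos θ)) =
        a • (fun θ : ℝ => Real.cos (((0 : ℕ) : ℝ) * θ)) := by ext θ; simp
    rw [this]
    exact Submodule.smul_mem _ _ (Submodule.subset_span ⟨0, rfl⟩)
  | add p q hp hq =>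
    have : (fun θ : ℝ => (p + q).eval (Real.cos θ)) =
      (fun θ => p.eval (Real.cos θ)) + (fun θ => q.eval (Real.cos θ)) := by ext θ; simp
    rw [this]; exact Submodule.add_mem _ hp hq
  | monomial n a h =>
    have := cos_span_mul _ h
    convert this using 2 with θ
    simp [pow_succ, mul_assoc]

lemma poly_cos' (p : Polynomial ℝ) : ∃ (S : Finset ℕ) (c : ℕ → ℝ), ∀ θ : ℝ,
    p.eval (Real.cos θ) = ∑ k ∈ S, c k * Real.cos (k * θ) := by
  obtain ⟨c, hc⟩ := (Finsupp.mem_span_range_iff_exists_finsupp).1 (poly_cos p)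
  refine ⟨c.support, c, fun θ => ?_⟩
  have := congrFun hc θ
  simp only [Finsupp.sum, Finset.sum_apply, Pi.smul_apply, smul_eq_mul] at this
  exact this.symm

open MeasureTheory ProbabilityTheory in
lemma gauss_cos (s : NNReal) (k α : ℝ) :
    ∫ x, Real.cos (α + k * x) ∂(gaussianReal 0 s) = Real.exp (-(k ^ 2 * s) / 2) * Real.cos α := by
  have h := charFun_gaussianReal (μ := 0) (v := s) k
  rw [charFun_apply_real] at h
  have hint : Integrable (fun x : ℝ => Complex.exp (k * x * Complex.I)) (gaussianReal 0 s) := by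
    refine (integrable_const (1 : ℝ)).mono' (by fun_prop) (Eventually.of_forall fun x => ?_)
    rw [show (k : ℂ) * x * Complex.I = ((k * x : ℝ) : ℂ) * Complex.I by push_cast; ring,
      Complex.norm_exp_ofReal_mul_I]
  have h1 : ∀ x : ℝ, Real.cos (α + k * x) =
      (Complex.exp (α * Complex.I) * Complex.exp (k * x * Complex.I)).re := by
    intro x
    rw [← Complex.exp_add, ← add_mul, ← Complex.ofReal_mul, ← Complex.ofReal_add,
      Complex.exp_ofReal_mul_I_re]
  have h2 : ∫ x, Real.cos (α + k * x) ∂(gaussianReal 0 s) =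
      (∫ x, Complex.exp (α * Complex.I) * Complex.exp (k * x * Complex.I)
        ∂(gaussianReal 0 s)).re := by
    rw [← RCLike.re_eq_complex_re, ← integral_re (hint.const_mul _)]
    exact integral_congr_ae (Eventually.of_forall fun x => h1 x)
  rw [h2, integral_const_mul, h]
  have e : Complex.exp (k * (0 : ℝ) * Complex.I - s * k ^ 2 / 2) =
      ((Real.exp (-(k ^ 2 * s) / 2) : ℝ) : ℂ) := by
    push_cast
    congr 1
    ring
  rw [e, Complex.re_mul_ofReal, Complex.exp_ofReal_mul_I_re]
  ring

open MeasureTheory ProbabilityTheory in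
lemma heat_bound {S : Finset ℕ} {c : ℕ → ℝ} {m M : ℝ}
    (h : ∀ θ : ℝ, m ≤ ∑ k ∈ S, c k * Real.cos (k * θ) ∧ ∑ k ∈ S, c k * Real.cos (k * θ) ≤ M)
    {s : ℝ} (hs : 0 ≤ s) (θ : ℝ) :
    m ≤ ∑ k ∈ S, c k * (Real.exp (-((k : ℝ) ^ 2 * s) / 2) * Real.cos (k * θ)) ∧
     ∑ k ∈ S, c k * (Real.exp (-((k : ℝ) ^ 2 * s) / 2) * Real.cos (k * θ)) ≤ M := by
  lift s to NNReal using hs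
  have hi : ∀ k : ℕ, Integrable (fun x => c k * Real.cos (k * θ + k * x)) (gaussianReal 0 s) := by
    intro k
    refine Integrable.const_mul ?_ _
    refine (integrable_const (1 : ℝ)).mono' (by fun_prop) (Eventually.of_forall fun x => ?_)
    exact Real.abs_cos_le_one _
  have e : ∑ k ∈ S, c k * (Real.exp (-((k : ℝ) ^ 2 * s) / 2) * Real.cos (k * θ)) =
      ∫ x, ∑ k ∈ S, c k * Real.cos (k * θ + k * x) ∂(gaussianReal 0 s) := by
    rw [integral_finset_sum _ fun k _ => hi k]
    refine Finset.sum_congr rfl fun k _ => ?_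
    rw [integral_const_mul, gauss_cos]
  have hsum : Integrable (fun x => ∑ k ∈ S, c k * Real.cos (k * θ + k * x)) (gaussianReal 0 s) :=
    integrable_finset_sum _ fun k _ => hi k
  have hb : ∀ x : ℝ, m ≤ ∑ k ∈ S, c k * Real.cos (k * θ + k * x) ∧
      ∑ k ∈ S, c k * Real.cos (k * θ + k * x) ≤ M := by
    intro x
    have := h (θ + x)
    simpa only [mul_add] using this
  rw [e]
  constructor
  · have := integral_mono (integrable_const m) hsum fun x => (hb x).1
    simpa using this
  · have := integral_mono hsum (integrable_const M) fun x => (hb x).2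
    simpa using this

lemma approx_lemma {J : Set ℝ} (hJ : IsClosed J) (hJ1 : J ⊆ Icc (-1) 1) {U V : ℝ → ℝ}
    (hU : UpperSemicontinuousOn U J) (hV : LowerSemicontinuousOn V J) {cap η : ℝ}
    (hcap : 0 ≤ cap) (hη : 0 < η)
    (hU0 : ∀ y ∈ J, 0 ≤ U y ∧ U y ≤ cap) (hUV : ∀ y ∈ J, U y ≤ V y) :
    ∃ (S : Finset ℕ) (c : ℕ → ℝ),
      (∀ y ∈ J, U y ≤ (∑ k ∈ S, c k * Real.cos (k * (y + 1))) + η ∧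
        (∑ k ∈ S, c k * Real.cos (k * (y + 1))) ≤ V y + η) ∧
      ∀ θ : ℝ, -η ≤ ∑ k ∈ S, c k * Real.cos (k * θ) ∧
        ∑ k ∈ S, c k * Real.cos (k * θ) ≤ cap + η := by
  obtain ⟨g, hg⟩ := exists_continuous_forall_mem_convex_of_local_const (X := ℝ) (E := ℝ)
    (t := fun y => {c | (y ∈ J → U y - η / 2 < c ∧ c < V y + η / 2) ∧ 0 ≤ c ∧ c ≤ cap})
    (by
      intro y
      by_cases hy : y ∈ J
      · have : {c | (y ∈ J → U y - η / 2 < c ∧ c < V y + η / 2) ∧ 0 ≤ c ∧ c ≤ cap} =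
          Ioo (U y - η / 2) (V y + η / 2) ∩ Icc 0 cap := by ext c; simp [hy]
        rw [this]; exact (convex_Ioo _ _).inter (convex_Icc _ _)
      · have : {c | (y ∈ J → U y - η / 2 < c ∧ c < V y + η / 2) ∧ 0 ≤ c ∧ c ≤ cap} =
          Icc 0 cap := by ext c; simp [hy]
        rw [this]; exact convex_Icc _ _)
    (by
      intro y
      by_cases hy : y ∈ J
      · refine ⟨U y, ?_⟩
        have h1 := eventually_nhdsWithin_iff.1 (hU y hy (U y + η / 2) (by linarith))
        have h2 := eventually_nhdsWithin_iff.1 (hV y hy (U y - η / 2) (by linarith [hUV y hy]))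
        filter_upwards [h1, h2] with y' h1 h2
        exact ⟨fun hy' => ⟨by linarith [h1 hy'], by linarith [h2 hy']⟩, hU0 y hy⟩
      · refine ⟨0, ?_⟩
        filter_upwards [hJ.isOpen_compl.mem_nhds hy] with y' hy'
        exact ⟨fun h => absurd h hy', le_rfl, hcap⟩)
  obtain ⟨p, hp⟩ := exists_polynomial_near_of_continuousOn (-1) 1
    (fun c => g (Real.arccos c - 1)) (by
      have := Real.continuous_arccos
      fun_prop) (η / 2) (by linarith)
  obtain ⟨S, c, hc⟩ := poly_cos' p
  refine ⟨S, c, ?_, ?_⟩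
  · intro y hy
    have h1 := hp (Real.cos (y + 1)) (Real.cos_mem_Icc _)
    have h2 := hJ1 hy
    rw [Real.arccos_cos (by linarith [h2.1]) (by linarith [h2.2, Real.pi_gt_three]),
      add_sub_cancel_right, abs_lt, hc] at h1
    have h3 := (hg y).1 hy
    constructor <;> linarith [h1.1, h1.2, h3.1, h3.2]
  · intro θ
    have h1 := hp (Real.cos θ) (Real.cos_mem_Icc _)
    rw [abs_lt, hc] at h1
    have h3 := (hg (Real.arccos (Real.cos θ) - 1)).2
    constructor <;> linarith [h1.1, h1.2, h3.1, h3.2]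

lemma jet_psi (r μ σ lam b t x y : ℝ) :
    Jet r μ σ (fun t x y => Real.exp (lam * (b - t)) * (1 + x + y)) (t, x, y)
      (Real.exp (lam * (b - t)) * (lam * (1 + x + y) - r * x - μ * y)) := by
  have hA : HasDerivAt (fun s => Real.exp (lam * (b - s)) * (1 + x + y))
      (Real.exp (lam * (b - t)) * (lam * (-1)) * (1 + x + y)) t :=
    ((((hasDerivAt_id t).const_sub b).const_mul lam).exp).mul_const _
  have hB : HasDerivAt (fun z => Real.exp (lam * (b - t)) * (1 + z + y))
      (Real.exp (lam * (b - t)) * 1) x :=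
    (((hasDerivAt_id x).const_add 1).add_const y).const_mul _
  refine Jet.of_hasDeriv (D := fun _ => Real.exp (lam * (b - t))) (E := 0) (by fun_prop) hA hB ?_
    (hasDerivAt_const _ _) ?_
  · refine Eventually.of_forall fun z => ?_
    have := ((hasDerivAt_id z).const_add (1 + x)).const_mul (Real.exp (lam * (b - t)))
    simpa using this
  · ring

lemma jet_time (r μ σ T t x y : ℝ) :
    Jet r μ σ (fun t x y => T - t) (t, x, y) 1 := by
  refine Jet.of_hasDeriv (A := -1) (B := 0) (D := fun _ => 0) (E := 0) (by fun_prop)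
    ((hasDerivAt_id t).const_sub T) (hasDerivAt_const _ _)
    (Eventually.of_forall fun z => hasDerivAt_const _ _) (hasDerivAt_const _ _) (by ring)

lemma jet_time2 (r μ σ T s t x y : ℝ) :
    Jet r μ σ (fun t x y => ((T - t) / s) ^ 2) (t, x, y) (2 * (T - t) / s ^ 2) := by
  have := (((hasDerivAt_id t).const_sub T).div_const s).pow 2
  refine Jet.of_hasDeriv (A := _) (B := 0) (D := fun _ => 0) (E := 0) (by fun_prop)
    this (hasDerivAt_const _ _)
    (Eventually.of_forall fun z => hasDerivAt_const _ _) (hasDerivAt_const _ _) ?_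
  simp; ring

lemma jet_x (r μ σ ξ t x y : ℝ) :
    Jet r μ σ (fun t x y => (x * Real.exp (-(r * t)) - ξ) ^ 2) (t, x, y) 0 := by
  have hA := ((((((hasDerivAt_id t).const_mul r).neg).exp).const_mul x).sub_const ξ).pow 2
  have hB := ((((hasDerivAt_id x).mul_const (Real.exp (-(r * t)))).sub_const ξ)).pow 2
  refine Jet.of_hasDeriv (D := fun _ => 0) (E := 0) (by fun_prop)
    hA hB
    (Eventually.of_forall fun z => hasDerivAt_const _ _) (hasDerivAt_const _ _) ?_
  simp; ring

lemma jet_y2 (r μ σ t x y : ℝ) :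
    Jet r μ σ (fun t x y => y ^ 2 * Real.exp (-((2 * μ + σ ^ 2) * t))) (t, x, y) 0 := by
  have hA := (((((hasDerivAt_id t).const_mul (2 * μ + σ ^ 2)).neg).exp).const_mul (y ^ 2))
  refine Jet.of_hasDeriv (B := 0) (D := fun z => (2 * z) * Real.exp (-((2 * μ + σ ^ 2) * t)))
    (E := 2 * Real.exp (-((2 * μ + σ ^ 2) * t))) (by fun_prop)
    hA (hasDerivAt_const _ _) (Eventually.of_forall fun z => ?_) ?_ ?_
  · have := ((hasDerivAt_id z).pow 2).mul_const (Real.exp (-((2 * μ + σ ^ 2) * t)))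
    simpa using this
  · have := ((hasDerivAt_id y).const_mul 2).mul_const (Real.exp (-((2 * μ + σ ^ 2) * t)))
    simpa using this
  · simp; ring

/-- log-coordinate -/
noncomputable def Yc (μ σ T L t y : ℝ) : ℝ := Real.log y - L + (μ - σ ^ 2 / 2) * (T - t)

lemma Yc_t (μ σ T L t y : ℝ) :
    HasDerivAt (fun t => Yc μ σ T L t y) (-(μ - σ ^ 2 / 2)) t := by
  have := (((hasDerivAt_id t).const_sub T).const_mul (μ - σ ^ 2 / 2)).const_add (Real.log y - L)
  simpa [Yc] using this

lemma Yc_y (μ σ T L t y : ℝ) (hy : 0 < y) :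
    HasDerivAt (fun y => Yc μ σ T L t y) (y⁻¹) y := by
  have := ((Real.hasDerivAt_log hy.ne').sub_const L).add_const ((μ - σ ^ 2 / 2) * (T - t))
  simpa [Yc] using this

lemma Yc_cd (μ σ T L t x y : ℝ) (hy : 0 < y) :
    ContDiffAt ℝ 2 (fun q : ℝ × ℝ × ℝ => Yc μ σ T L q.1 q.2.2) (t, x, y) := by
  unfold Yc
  have : ContDiffAt ℝ 2 (fun q : ℝ × ℝ × ℝ => Real.log q.2.2) (t, x, y) :=
    ContDiffAt.log (by fun_prop) hy.ne'
  exact (this.sub contDiffAt_const).add (by fun_prop)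

lemma jet_cos (r μ σ T L κ t x y : ℝ) (hy : 0 < y) :
    Jet r μ σ (fun t x y => Real.exp (-(κ ^ 2 * (σ ^ 2 * (T - t))) / 2) *
      Real.cos (κ * (Yc μ σ T L t y + 1))) (t, x, y) 0 := by
  have hA := (((((((hasDerivAt_id t).const_sub T).const_mul (σ ^ 2)).const_mul (κ ^ 2)).neg).div_const
    2).exp).mul ((((Yc_t μ σ T L t y).add_const 1).const_mul κ).cos)
  set e := Real.exp (-(κ ^ 2 * (σ ^ 2 * (T - t))) / 2) with he
  have hY := Yc_cd μ σ T L t x y hy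
  refine Jet.of_hasDeriv (B := 0)
    (D := fun z => e * (-Real.sin (κ * (Yc μ σ T L t z + 1)) * (κ * z⁻¹)))
    (E := e * (-(Real.cos (κ * (Yc μ σ T L t y + 1)) * (κ * y⁻¹)) * (κ * y⁻¹) +
      -Real.sin (κ * (Yc μ σ T L t y + 1)) * (κ * (-(y ^ 2)⁻¹)))) ?_
    hA (hasDerivAt_const _ _) ?_ ?_ ?_
  · refine ContDiffAt.mul (by fun_prop) (ContDiffAt.cos ?_)
    exact contDiffAt_const.mul (hY.add contDiffAt_const)
  · filter_upwards [lt_mem_nhds hy] with z hz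
    exact ((((Yc_y μ σ T L t z hz).add_const 1).const_mul κ).cos).const_mul e
  · refine HasDerivAt.const_mul e (HasDerivAt.mul ?_ ((hasDerivAt_inv hy.ne').const_mul κ))
    exact (((((Yc_y μ σ T L t y hy).add_const 1).const_mul κ).sin)).neg
  · simp only [Pi.neg_apply, id, ← he]
    field_simp
    ring

lemma jet_sum (r μ σ T L t x y : ℝ) (hy : 0 < y) (S : Finset ℕ) (c : ℕ → ℝ) :
    Jet r μ σ (fun t x y => ∑ k ∈ S, c k * (Real.exp (-((k : ℝ) ^ 2 * (σ ^ 2 * (T - t))) / 2) *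
      Real.cos (k * (Yc μ σ T L t y + 1)))) (t, x, y) 0 := by
  induction S using Finset.induction_on with
  | empty => simpa using Jet.const (r := r) (μ := μ) (σ := σ) (p := (t, x, y)) 0
  | insert k S hk ih =>
    have := ((jet_cos r μ σ T L k t x y hy).const_mul (c k)).add ih
    simpa [Finset.sum_insert hk] using this

lemma jet_Q (r μ σ T L t x y : ℝ) (hy : 0 < y) :
    Jet r μ σ (fun t x y => Yc μ σ T L t y ^ 4 + 6 * σ ^ 2 * (T - t) * Yc μ σ T L t y ^ 2
      + 3 * σ ^ 4 * (T - t) ^ 2) (t, x, y) 0 := by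
  have hs := (hasDerivAt_id t).const_sub T
  have hYt := Yc_t μ σ T L t y
  have hA := ((hYt.pow 4).add ((hs.const_mul (6 * σ ^ 2)).mul (hYt.pow 2))).add
    ((hs.pow 2).const_mul (3 * σ ^ 4))
  have hY := Yc_cd μ σ T L t x y hy
  refine Jet.of_hasDeriv (B := 0)
    (D := fun z => (4 * Yc μ σ T L t z ^ 3 + 12 * σ ^ 2 * (T - t) * Yc μ σ T L t z) * z⁻¹)
    (E := (4 * (3 * Yc μ σ T L t y ^ 2 * y⁻¹) + 12 * σ ^ 2 * (T - t) * y⁻¹) * y⁻¹ +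
      (4 * Yc μ σ T L t y ^ 3 + 12 * σ ^ 2 * (T - t) * Yc μ σ T L t y) * (-(y ^ 2)⁻¹)) ?_
    hA (hasDerivAt_const _ _) ?_ ?_ ?_
  · exact ((hY.pow 4).add (ContDiffAt.mul (by fun_prop) (hY.pow 2))).add (by fun_prop)
  · filter_upwards [lt_mem_nhds hy] with z hz
    have h := Yc_y μ σ T L t z hz
    have := ((h.pow 4).add ((h.pow 2).const_mul (6 * σ ^ 2 * (T - t)))).add_const
      (3 * σ ^ 4 * (T - t) ^ 2)
    refine this.congr_deriv ?_
    simp; ring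
  · have h := Yc_y μ σ T L t y hy
    refine HasDerivAt.mul ?_ (hasDerivAt_inv hy.ne')
    have := ((h.pow 3).const_mul 4).add (h.const_mul (12 * σ ^ 2 * (T - t)))
    refine this.congr_deriv ?_
    simp
  · simp only [id]
    field_simp
    simp
    ring

lemma clash {C : ℝ → ℝ} {r μ σ a b W L : ℝ} {u v : ℝ → ℝ × ℝ → ℝ}
    (hu : IsViscSubsol C r μ σ a b u)
    (hW : ∀ t ∈ Icc a b, ∀ x ∈ Sbar, u t x ≤ W)
    (hu_usc : UpperSemicontinuousOn (fun p : ℝ × (ℝ × ℝ) => u p.1 p.2) (Icc a b ×ˢ Sbar))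
    (hv : IsViscSupersol C r μ σ a b v)
    (hL : ∀ t ∈ Icc a b, ∀ x ∈ Sbar, -(L * (1 + x.1 + x.2)) ≤ v t x)
    (hv_lsc : LowerSemicontinuousOn (fun p : ℝ × (ℝ × ℝ) => v p.1 p.2) (Icc a b ×ˢ Sbar))
    {K Kb : Set (ℝ × ℝ × ℝ)} (hK : IsCompact K) (hKb : IsCompact Kb) (hKbK : Kb ⊆ K)
    (hKD : K ⊆ domI a b)
    (hopen : ∀ z ∈ K, z ∉ Kb → ∀ᶠ q in 𝓝 z, q ∈ domI a b → q ∈ K)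
    {ψ h B P : ℝ → ℝ → ℝ → ℝ} {z₀ : ℝ × ℝ × ℝ} (hz₀ : z₀ ∈ K) {ε θ δ η A L' T : ℝ}
    (hε : 0 < ε) (hδ : 0 < δ) (hη : 0 < η) (hA : 0 ≤ A)
    (hθ : θ = u z₀.1 z₀.2 - v z₀.1 z₀.2 - ε * ψ z₀.1 z₀.2.1 z₀.2.2)
    (hψ : ∀ z ∈ K, ∃ l, 1 ≤ l ∧ Jet r μ σ ψ z l)
    (hh : ∀ z ∈ K, Jet r μ σ h z 0)
    (hB : ∀ z ∈ K, ∃ l, 0 ≤ l ∧ Jet r μ σ B z l)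
    (hB0 : ∀ z ∈ K, 0 ≤ B z.1 z.2.1 z.2.2)
    (hP : ∀ z ∈ K, ∃ l, 0 ≤ l ∧ Jet r μ σ P z l)
    (hP0 : ∀ z ∈ K, 0 ≤ P z.1 z.2.1 z.2.2)
    (hPz : P z₀.1 z₀.2.1 z₀.2.2 = 0)
    (hua : ∀ z ∈ K, u z.1 z.2 ≤ u z₀.1 z₀.2 + δ)
    (hψa : ∀ z ∈ K, ε * ψ z₀.1 z₀.2.1 z₀.2.2 - δ ≤ ε * ψ z.1 z.2.1 z.2.2)
    (hva : ∀ z ∈ K, v z.1 z.2 < v z₀.1 z₀.2 + 3 * δ →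
      (v z.1 z.2 : EReal) < lscEnv (MopF C v) (Icc a b ×ˢ Sbar) z)
    (hvb : ∀ z ∈ K, -L' ≤ v z.1 z.2)
    (hT : ∀ z ∈ K, 0 ≤ T - z.1 ∧ ε / 2 * (T - z.1) ≤ δ)
    (hhb : ∀ z ∈ K, -η ≤ h z.1 z.2.1 z.2.2 ∧ h z.1 z.2.1 z.2.2 ≤ u z₀.1 z₀.2 + δ + η)
    (hA1 : u z₀.1 z₀.2 + δ < A) (hA2 : v z₀.1 z₀.2 + 3 * δ + L' < A)
    (hbd : ∀ z ∈ Kb, P z.1 z.2.1 z.2.2 = 0 →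
      (z.1 = T ∧ u z.1 z.2 ≤ h z.1 z.2.1 z.2.2 + η ∧
        h z.1 z.2.1 z.2.2 ≤ v z.1 z.2 + ε * ψ z.1 z.2.1 z.2.2 + θ + η) ∨ 1 ≤ B z.1 z.2.1 z.2.2) :
    ε / 4 * (T - z₀.1) ≤ 4 * η + 2 * A * B z₀.1 z₀.2.1 z₀.2.2 := by
  have hHv : ∀ z ∈ K, h z.1 z.2.1 z.2.2 + ((-ε) * ψ z.1 z.2.1 z.2.2 + ((-A) * B z.1 z.2.1 z.2.2 +
        (ε / 2 * (T - z.1) + (- θ - 2 * η)))) ≤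
        v z₀.1 z₀.2 + 3 * δ - A * B z.1 z.2.1 z.2.2 := by
    intro z hz
    have h1 := (hhb z hz).2
    have h2 := hψa z hz
    have h3 := (hT z hz).2
    linarith
  have e1 := core_sub hu hW hu_usc hK hKb hKbK hKD hopen
    (H := fun t x y => h t x y + (A * B t x y + (ε / 4 * (T - t) + 2 * η))) (P := P) ?_ hP hP0 ?_
    z₀ hz₀ hPz
  have e2 := core_super hv hL hv_lsc hK hKb hKbK hKD hopen
    (H := fun t x y => h t x y + ((-ε) * ψ t x y + ((-A) * B t x y + (ε / 2 * (T - t) + (- θ - 2 * η)))))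
    (P := P) ?_ hP hP0 ?_ ?_ z₀ hz₀ hPz
  · skip
    linarith
  · intro z hz
    obtain ⟨l, hl, jB⟩ := hB z hz
    obtain ⟨m, hm, jψ⟩ := hψ z hz
    refine ⟨_, ?_, (hh z hz).add ((jψ.const_mul (-ε)).add ((jB.const_mul (-A)).add
      (((jet_time r μ σ T z.1 z.2.1 z.2.2).const_mul (ε / 2)).add (Jet.const _))))⟩
    nlinarith [mul_nonneg hA hl]
  · intro z hz hlt
    have := hHv z hz
    have h2 := mul_nonneg hA (hB0 z hz)
    exact hva z hz (by linarith)
  · intro z hz hz0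
    have hzK := hKbK hz
    have h2 := mul_nonneg hA (hB0 z hzK)
    rcases hbd z hz hz0 with ⟨h3, h4, h5⟩ | h3
    · rw [← h3]; linarith
    · have := hHv z hzK
      have h6 := hvb z hzK
      have h7 := mul_le_mul_of_nonneg_left h3 hA
      linarith
  · intro z hz
    obtain ⟨l, hl, jB⟩ := hB z hz
    refine ⟨_, ?_, (hh z hz).add ((jB.const_mul A).add
      (((jet_time r μ σ T z.1 z.2.1 z.2.2).const_mul (ε / 4)).add (Jet.const _)))⟩
    nlinarith [mul_nonneg hA hl]
  · intro z hz hz0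
    have hzK := hKbK hz
    have h2 := mul_nonneg hA (hB0 z hzK)
    rcases hbd z hz hz0 with ⟨h3, h4, h5⟩ | h3
    · rw [← h3]; linarith
    · have h6 := hua z hzK
      have h7 := mul_le_mul_of_nonneg_left h3 hA
      have h8 := (hhb z hzK).1
      have h9 := mul_nonneg (by positivity : (0:ℝ) ≤ ε / 4) (hT z hzK).1
      linarith

/-- Local situation around a maximum point. -/
structure Loc (C : ℝ → ℝ) (r μ σ a b W L : ℝ) (u v : ℝ → ℝ × ℝ → ℝ) (ψ : ℝ → ℝ → ℝ → ℝ)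
    (z₀ : ℝ × ℝ × ℝ) (ε θ δ A L' ρ : ℝ) : Prop where
  hu : IsViscSubsol C r μ σ a b u
  hW : ∀ t ∈ Icc a b, ∀ x ∈ Sbar, u t x ≤ W
  hu0 : ∀ t ∈ Icc a b, ∀ x ∈ Sbar, 0 ≤ u t x
  hu_usc : UpperSemicontinuousOn (fun p : ℝ × (ℝ × ℝ) => u p.1 p.2) (Icc a b ×ˢ Sbar)
  hv : IsViscSupersol C r μ σ a b v
  hL : ∀ t ∈ Icc a b, ∀ x ∈ Sbar, -(L * (1 + x.1 + x.2)) ≤ v t x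
  hv_lsc : LowerSemicontinuousOn (fun p : ℝ × (ℝ × ℝ) => v p.1 p.2) (Icc a b ×ˢ Sbar)
  hz₀ : z₀ ∈ Icc a b ×ˢ Sbar
  hε : 0 < ε
  hδ : 0 < δ
  hρ : 0 < ρ
  hb : z₀.1 + ρ < b
  hερ : ε * ρ ≤ δ
  hθ : θ = u z₀.1 z₀.2 - v z₀.1 z₀.2 - ε * ψ z₀.1 z₀.2.1 z₀.2.2
  hmax : ∀ z ∈ Icc a b ×ˢ Sbar, u z.1 z.2 ≤ v z.1 z.2 + ε * ψ z.1 z.2.1 z.2.2 + θ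
  hψ : ∀ z ∈ Icc a b ×ˢ Sbar, ∃ l, 1 ≤ l ∧ Jet r μ σ ψ z l
  hdom : ∀ z ∈ Icc a b ×ˢ Sbar, dist z z₀ ≤ ρ → z ∈ domI a b
  hua : ∀ z ∈ Icc a b ×ˢ Sbar, dist z z₀ ≤ ρ → u z.1 z.2 ≤ u z₀.1 z₀.2 + δ
  hψa : ∀ z ∈ Icc a b ×ˢ Sbar, dist z z₀ ≤ ρ →
    ε * ψ z₀.1 z₀.2.1 z₀.2.2 - δ ≤ ε * ψ z.1 z.2.1 z.2.2
  hva : ∀ z ∈ Icc a b ×ˢ Sbar, dist z z₀ ≤ ρ → v z.1 z.2 < v z₀.1 z₀.2 + 3 * δ →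
      (v z.1 z.2 : EReal) < lscEnv (MopF C v) (Icc a b ×ˢ Sbar) z
  hvb : ∀ z ∈ Icc a b ×ˢ Sbar, dist z z₀ ≤ ρ → -L' ≤ v z.1 z.2
  hA : 0 ≤ A
  hA1 : u z₀.1 z₀.2 + δ < A
  hA2 : v z₀.1 z₀.2 + 3 * δ + L' < A

lemma Loc.clash {C : ℝ → ℝ} {r μ σ a b W L : ℝ} {u v : ℝ → ℝ × ℝ → ℝ} {ψ : ℝ → ℝ → ℝ → ℝ}
    {z₀ : ℝ × ℝ × ℝ} {ε θ δ A L' ρ : ℝ} (hl : Loc C r μ σ a b W L u v ψ z₀ ε θ δ A L' ρ)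
    {T η : ℝ} (hη : 0 < η) (hT0 : z₀.1 ≤ T) (hT : T < z₀.1 + ρ) {h B P : ℝ → ℝ → ℝ → ℝ}
    (hh : ∀ z ∈ Icc a b ×ˢ Sbar, dist z z₀ ≤ ρ → z.1 ≤ T → Jet r μ σ h z 0)
    (hB : ∀ z ∈ Icc a b ×ˢ Sbar, dist z z₀ ≤ ρ → z.1 ≤ T → ∃ l, 0 ≤ l ∧ Jet r μ σ B z l)
    (hB0 : ∀ z ∈ Icc a b ×ˢ Sbar, dist z z₀ ≤ ρ → z.1 ≤ T → 0 ≤ B z.1 z.2.1 z.2.2)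
    (hP : ∀ z ∈ Icc a b ×ˢ Sbar, dist z z₀ ≤ ρ → z.1 ≤ T → ∃ l, 0 ≤ l ∧ Jet r μ σ P z l)
    (hP0 : ∀ z ∈ Icc a b ×ˢ Sbar, dist z z₀ ≤ ρ → z.1 ≤ T → 0 ≤ P z.1 z.2.1 z.2.2)
    (hPz : P z₀.1 z₀.2.1 z₀.2.2 = 0)
    (hhb : ∀ z ∈ Icc a b ×ˢ Sbar, dist z z₀ ≤ ρ → z.1 ≤ T → -η ≤ h z.1 z.2.1 z.2.2 ∧
      h z.1 z.2.1 z.2.2 ≤ u z₀.1 z₀.2 + δ + η)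
    (hbd1 : ∀ z ∈ Icc a b ×ˢ Sbar, dist z z₀ ≤ ρ → z.1 = T → P z.1 z.2.1 z.2.2 = 0 →
      (u z.1 z.2 ≤ h z.1 z.2.1 z.2.2 + η ∧
        h z.1 z.2.1 z.2.2 ≤ v z.1 z.2 + ε * ψ z.1 z.2.1 z.2.2 + θ + η))
    (hbd2 : ∀ z ∈ Icc a b ×ˢ Sbar, dist z z₀ = ρ → z.1 ≤ T → P z.1 z.2.1 z.2.2 = 0 →
      1 ≤ B z.1 z.2.1 z.2.2) :
    ε / 4 * (T - z₀.1) ≤ 4 * η + 2 * A * B z₀.1 z₀.2.1 z₀.2.2 := by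
  set E : Set (ℝ × ℝ × ℝ) := Icc a b ×ˢ Sbar with hE
  have hEc : IsClosed E := isClosed_Icc.prod Sbar_closed
  have hKc : IsCompact {z : ℝ × ℝ × ℝ | z ∈ E ∧ dist z z₀ ≤ ρ ∧ z.1 ≤ T} := by
    refine (isCompact_closedBall z₀ ρ).of_isClosed_subset ?_ fun z hz => hz.2.1
    have c1 : IsClosed {z : ℝ × ℝ × ℝ | dist z z₀ ≤ ρ} := isClosed_le (by fun_prop) (by fun_prop)
    have c2 : IsClosed {z : ℝ × ℝ × ℝ | z.1 ≤ T} := isClosed_le (by fun_prop) (by fun_prop)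
    exact hEc.inter (c1.inter c2)
  have hKbc : IsClosed {z : ℝ × ℝ × ℝ | dist z z₀ = ρ ∨ z.1 = T} :=
    (isClosed_eq (by fun_prop) (by fun_prop)).union (isClosed_eq (by fun_prop) (by fun_prop))
  refine _root_.clash hl.hu hl.hW hl.hu_usc hl.hv hl.hL hl.hv_lsc hKc (hKc.inter_right hKbc)
    inter_subset_left (fun z hz => hl.hdom z hz.1 hz.2.1) ?_ (z₀ := z₀) ⟨hl.hz₀, by simp [hl.hρ.le], hT0⟩
    hl.hε hl.hδ hη hl.hA hl.hθ (fun z hz => hl.hψ z hz.1) (fun z hz => hh z hz.1 hz.2.1 hz.2.2)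
    (fun z hz => hB z hz.1 hz.2.1 hz.2.2) (fun z hz => hB0 z hz.1 hz.2.1 hz.2.2)
    (fun z hz => hP z hz.1 hz.2.1 hz.2.2) (fun z hz => hP0 z hz.1 hz.2.1 hz.2.2) hPz
    (fun z hz => hl.hua z hz.1 hz.2.1) (fun z hz => hl.hψa z hz.1 hz.2.1)
    (fun z hz => hl.hva z hz.1 hz.2.1) (fun z hz => hl.hvb z hz.1 hz.2.1) ?_
    (fun z hz => hhb z hz.1 hz.2.1 hz.2.2) hl.hA1 hl.hA2 ?_
  · rintro z ⟨hz1, hz2, hz3⟩ hzb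
    have h1 : dist z z₀ < ρ := lt_of_le_of_ne hz2 fun h => hzb ⟨⟨hz1, hz2, hz3⟩, Or.inl h⟩
    have h2 : z.1 < T := lt_of_le_of_ne hz3 fun h => hzb ⟨⟨hz1, hz2, hz3⟩, Or.inr h⟩
    have o1 : IsOpen {q : ℝ × ℝ × ℝ | dist q z₀ < ρ} := isOpen_lt (by fun_prop) (by fun_prop)
    have o2 : IsOpen {q : ℝ × ℝ × ℝ | q.1 < T} := isOpen_lt (by fun_prop) (by fun_prop)
    filter_upwards [o1.mem_nhds h1, o2.mem_nhds h2] with q hq1 hq2 hq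
    exact ⟨domI_sub hq, le_of_lt hq1, le_of_lt hq2⟩
  · rintro z ⟨hz1, hz2, hz3⟩
    refine ⟨by linarith, ?_⟩
    have h1 : dist z.1 z₀.1 ≤ ρ := (le_max_left _ _).trans hz2
    rw [Real.dist_eq, abs_le] at h1
    have h2 : T - z.1 ≤ 2 * ρ := by linarith [h1.1]
    have := hl.hερ
    nlinarith [hl.hε]
  · rintro z ⟨⟨hz1, hz2, hz3⟩, hz4⟩ hz0
    rcases hz4 with h | h
    · exact Or.inr (hbd2 z hz1 h hz3 hz0)
    · exact Or.inl ⟨h, hbd1 z hz1 hz2 h hz0⟩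

lemma tau_absurd {ε A D s : ℝ} (hε : 0 < ε) (hA : 0 ≤ A) (hD : 0 ≤ D) (hs : 0 < s)
    (h : ∀ τ, 0 < τ → τ < s → ∀ η, 0 < η → ε / 4 * τ ≤ 4 * η + 2 * A * (D * τ ^ 2)) : False := by
  have h1 : ∀ τ, 0 < τ → τ < s → ε / 4 * τ ≤ 2 * A * (D * τ ^ 2) := by
    intro τ h1 h2
    refine le_of_forall_pos_le_add fun e he => ?_
    have := h τ h1 h2 (e / 4) (by positivity)
    linarith
  have hAD : 0 ≤ A * D := mul_nonneg hA hD
  have h2 : 0 < ε / (16 * (A * D + 1)) := by positivity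
  obtain ⟨τ, t0, t1⟩ := exists_between (lt_min hs h2)
  have h3 := h1 τ t0 (t1.trans_le (min_le_left _ _))
  have h4 := t1.trans_le (min_le_right _ _)
  rw [lt_div_iff₀ (by positivity)] at h4
  nlinarith

lemma exists_s (r x₀ ρ m : ℝ) (hρ : 0 < ρ) (hm : 0 < m) : ∃ s, 0 < s ∧ s < ρ ∧ s ≤ 1 ∧ s ≤ m ∧
    ∀ q, |q| < s → |x₀ * Real.exp (r * q) - x₀| < ρ := by
  have hc : ContinuousAt (fun q => x₀ * Real.exp (r * q)) 0 := by fun_prop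
  obtain ⟨e, he, h⟩ := Metric.continuousAt_iff.1 hc ρ hρ
  refine ⟨min (min e (ρ / 2)) (min 1 m), by positivity, ?_, ?_, ?_, ?_⟩
  · have : min (min e (ρ / 2)) (min 1 m) ≤ ρ / 2 := (min_le_left _ _).trans (min_le_right _ _)
    linarith
  · exact (min_le_right _ _).trans (min_le_left _ _)
  · exact (min_le_right _ _).trans (min_le_right _ _)
  · intro q hq
    have h1 : |q| < e := hq.trans_le ((min_le_left _ _).trans (min_le_left _ _))
    have := h (x := q) (by simpa [Real.dist_eq] using h1)
    simpa [Real.dist_eq] using this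

lemma x_of_P {r t t₀ x x₀ : ℝ} (h : x * Real.exp (-(r * t)) - x₀ * Real.exp (-(r * t₀)) = 0) :
    x = x₀ * Real.exp (r * (t - t₀)) := by
  have h1 : x * Real.exp (-(r * t)) * Real.exp (r * t) =
    x₀ * Real.exp (-(r * t₀)) * Real.exp (r * t) := by rw [sub_eq_zero.1 h]
  rw [mul_assoc, ← Real.exp_add, mul_assoc, ← Real.exp_add] at h1
  rw [show -(r * t) + r * t = 0 by ring, Real.exp_zero, mul_one] at h1
  rw [h1]; congr 2; ring

lemma dist3_le {z z₀ : ℝ × ℝ × ℝ} {ρ : ℝ} : dist z z₀ ≤ ρ ↔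
    |z.1 - z₀.1| ≤ ρ ∧ |z.2.1 - z₀.2.1| ≤ ρ ∧ |z.2.2 - z₀.2.2| ≤ ρ := by
  simp [Prod.dist_eq, Real.dist_eq]

lemma dist3_eq {z z₀ : ℝ × ℝ × ℝ} {ρ : ℝ} (h : dist z z₀ = ρ) (h1 : |z.1 - z₀.1| < ρ)
    (h2 : |z.2.1 - z₀.2.1| < ρ) : |z.2.2 - z₀.2.2| = ρ := by
  simp only [Prod.dist_eq, Real.dist_eq] at h
  have h4 := le_max_right |z.1 - z₀.1| (max |z.2.1 - z₀.2.1| |z.2.2 - z₀.2.2|)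
  have h5 := le_max_right |z.2.1 - z₀.2.1| |z.2.2 - z₀.2.2|
  refine le_antisymm (by linarith) ?_
  by_contra! h6
  have := max_lt h1 (max_lt h2 h6)
  linarith

lemma case_zero {C : ℝ → ℝ} {r μ σ a b W L : ℝ} {u v : ℝ → ℝ × ℝ → ℝ} {ψ : ℝ → ℝ → ℝ → ℝ}
    {z₀ : ℝ × ℝ × ℝ} {ε θ δ A L' ρ : ℝ} (hl : Loc C r μ σ a b W L u v ψ z₀ ε θ δ A L' ρ)
    (hx : z₀.2.2 = 0) : False := by
  obtain ⟨s, hs, hsρ, hs1, -, hsx⟩ := exists_s r z₀.2.1 ρ 1 hl.hρ one_pos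
  refine tau_absurd hl.hε hl.hA (D := 1 / s ^ 2) (by positivity) hs fun τ hτ hτs η hη => ?_
  have hz := hl.hz₀
  have hz1 : a ≤ z₀.1 ∧ z₀.1 ≤ b := hz.1
  have hz2 : 0 ≤ z₀.2.1 := hz.2.1
  have hρ := hl.hρ
  have hb := hl.hb
  set T := z₀.1 + τ with hT
  set zT : ℝ × ℝ × ℝ := (T, z₀.2.1 * Real.exp (r * τ), 0) with hzT
  have hzTE : zT ∈ Icc a b ×ˢ Sbar := by
    refine ⟨⟨?_, ?_⟩, ?_, ?_⟩
    · simp [hzT]; linarith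
    · simp [hzT]; linarith
    · simp [hzT]; positivity
    · simp [hzT]
  have hzTd : dist zT z₀ ≤ ρ := by
    rw [dist3_le]
    refine ⟨?_, ?_, ?_⟩
    · simp [hzT, hT, abs_of_pos hτ]; linarith
    · simp only [hzT]; exact (hsx τ (by rwa [abs_of_pos hτ])).le
    · simp [hzT, hx, hρ.le]
  have key := hl.clash (T := T) (η := η) hη (by linarith) (by linarith)
    (h := fun _ _ _ => u zT.1 zT.2) (B := fun t x y => ((T - t) / s) ^ 2)
    (P := fun t x y => (x * Real.exp (-(r * t)) - z₀.2.1 * Real.exp (-(r * z₀.1))) ^ 2 +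
      y ^ 2 * Real.exp (-((2 * μ + σ ^ 2) * t)))
    (fun z _ _ _ => Jet.const _)
    (fun z _ _ h => ⟨_, by
      have : 0 ≤ T - z.1 := by linarith
      positivity, jet_time2 r μ σ T s z.1 z.2.1 z.2.2⟩)
    (fun z _ _ _ => by positivity)
    (fun z _ _ _ => ⟨_, by norm_num, (jet_x r μ σ _ z.1 z.2.1 z.2.2).add (jet_y2 r μ σ z.1 z.2.1 z.2.2)⟩)
    (fun z _ _ _ => by positivity) (by simp [hx])
    (fun z _ _ _ => ⟨by have := hl.hu0 _ hzTE.1 _ hzTE.2; linarith,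
      by have := hl.hua _ hzTE hzTd; linarith⟩) ?_ ?_
  · refine key.trans' ?_ |>.trans (le_of_eq ?_)
    · simp [hT]
    · simp only [hT]; ring
  all_goals
    intro z hzE hzd hzt hP
    have e1 : z.2.1 * Real.exp (-(r * z.1)) - z₀.2.1 * Real.exp (-(r * z₀.1)) = 0 := by
      have h2 : 0 ≤ z.2.2 ^ 2 * Real.exp (-((2 * μ + σ ^ 2) * z.1)) := by positivity
      have := sq_nonneg (z.2.1 * Real.exp (-(r * z.1)) - z₀.2.1 * Real.exp (-(r * z₀.1)))
      exact pow_eq_zero_iff two_ne_zero |>.1 (by linarith)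
    have e2 : z.2.2 = 0 := by
      rw [e1] at hP
      have := Real.exp_pos (-((2 * μ + σ ^ 2) * z.1))
      simpa [this.ne'] using hP
    have e3 := x_of_P e1
  · have : z = zT := by
      refine Prod.ext hzt (Prod.ext ?_ e2)
      rw [e3, hzt]; simp [hzT, hT]
    subst this
    have := hl.hmax _ hzTE
    exact ⟨by linarith, by linarith⟩
  · by_cases h : |z.1 - z₀.1| < s
    · have := dist3_eq hzd (h.trans hsρ) (by rw [e3]; exact hsx _ h)
      rw [e2, hx] at this
      simp at this; linarith
    · push Not at h
      have : s ≤ T - z.1 := by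
        rcases le_abs'.1 h with h | h <;> linarith
      have : 1 ≤ (T - z.1) / s := by rwa [le_div_iff₀ hs, one_mul]
      show 1 ≤ ((T - z.1) / s) ^ 2
      exact one_le_pow₀ this

lemma log_gap {x₁ y ρ : ℝ} (hx : 0 < x₁) (hρ : 0 < ρ) (hρx : ρ ≤ x₁ / 2) (h : |y - x₁| = ρ) :
    ρ / (2 * x₁) ≤ |Real.log y - Real.log x₁| := by
  have hy : 0 < y := by
    have := abs_le.1 h.le
    linarith [this.1]
  rw [← Real.log_div hy.ne' hx.ne']
  rcases abs_eq hρ.le |>.1 h with h | h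
  · refine le_trans ?_ (le_abs_self _)
    have h1 := Real.one_sub_inv_le_log_of_pos (div_pos hy hx)
    refine le_trans ?_ h1
    have : y = x₁ + ρ := by linarith
    subst this
    rw [inv_div, one_sub_div hy.ne', div_le_div_iff₀ (by positivity) hy]
    nlinarith
  · refine le_trans ?_ (neg_le_abs _)
    have h1 := Real.log_le_sub_one_of_pos (div_pos hy hx)
    have : y = x₁ - ρ := by linarith
    subst this
    have h2 : (x₁ - ρ) / x₁ - 1 = -(2 * (ρ / (2 * x₁))) := by field_simp; ring
    have h3 : 0 < ρ / (2 * x₁) := by positivity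
    linarith

set_option maxHeartbeats 1000000 in
lemma case_pos {C : ℝ → ℝ} {r μ σ a b W L : ℝ} {u v : ℝ → ℝ × ℝ → ℝ} {ψ : ℝ → ℝ → ℝ → ℝ}
    {z₀ : ℝ × ℝ × ℝ} {ε θ δ A L' ρ : ℝ} (hl : Loc C r μ σ a b W L u v ψ z₀ ε θ δ A L' ρ)
    (hx : 0 < z₀.2.2) (hρx : ρ ≤ z₀.2.2 / 2) : False := by
  have hρ := hl.hρ
  obtain ⟨ν, hν⟩ : ∃ ν, ν = μ - σ ^ 2 / 2 := ⟨_, rfl⟩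
  obtain ⟨d, hd⟩ : ∃ d, d = ρ / (2 * z₀.2.2) := ⟨_, rfl⟩
  have hd0 : 0 < d := by rw [hd]; positivity
  obtain ⟨s, hs, hsρ, hs1, hsm, hsx⟩ := exists_s r z₀.2.1 ρ (d / (4 * (|ν| + 1))) hl.hρ (by positivity)
  have hsν : 2 * s * |ν| ≤ d / 2 := by
    rw [le_div_iff₀ (by positivity)] at hsm
    nlinarith [abs_nonneg ν]
  refine tau_absurd hl.hε hl.hA (D := 1 / s ^ 2 + 16 / d ^ 4 * (ν ^ 4 + 6 * σ ^ 2 * ν ^ 2 + 3 * σ ^ 4))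
    (by positivity) hs fun τ hτ hτs η hη => ?_
  have hz := hl.hz₀
  have hz1 : a ≤ z₀.1 ∧ z₀.1 ≤ b := hz.1
  have hz2 : 0 ≤ z₀.2.1 := hz.2.1
  have hb := hl.hb
  set T := z₀.1 + τ with hT
  set zT : ℝ → ℝ × ℝ × ℝ := fun y => (T, z₀.2.1 * Real.exp (r * τ), z₀.2.2 * Real.exp y) with hzT
  have hzTc : Continuous zT := by simp only [hzT]; fun_prop
  have hzTE : ∀ y, zT y ∈ Icc a b ×ˢ Sbar := by
    intro y
    refine ⟨⟨?_, ?_⟩, ?_, ?_⟩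
    · simp [hzT]; linarith
    · simp [hzT]; linarith
    · simp [hzT]; positivity
    · simp [hzT]; positivity
  set J : Set ℝ := {y | |z₀.2.2 * Real.exp y - z₀.2.2| ≤ ρ} with hJ
  have hzTd : ∀ y ∈ J, dist (zT y) z₀ ≤ ρ := by
    intro y hy
    rw [dist3_le]
    refine ⟨?_, ?_, ?_⟩
    · simp [hzT, hT, abs_of_pos hτ]; linarith
    · simp only [hzT]; exact (hsx τ (by rwa [abs_of_pos hτ])).le
    · exact hy
  have hJc : IsClosed J := isClosed_le (by fun_prop) (by fun_prop)
  have hJ1 : J ⊆ Icc (-1) 1 := by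
    intro y hy
    have hy2 : |z₀.2.2 * Real.exp y - z₀.2.2| ≤ ρ := hy
    have h1 := abs_le.1 hy2
    have h2 : Real.exp y ≤ 2 := by nlinarith [h1.2]
    have h3 : 1 / 2 ≤ Real.exp y := by nlinarith [h1.1]
    constructor
    · have h4 := Real.add_one_le_exp (-y)
      rw [Real.exp_neg] at h4
      have : (Real.exp y)⁻¹ ≤ 2 := by
        rw [inv_le_comm₀ (Real.exp_pos y) two_pos]; linarith
      linarith
    · linarith [Real.add_one_le_exp y]
  have hcap : 0 ≤ u z₀.1 z₀.2 + δ := by linarith [hl.hu0 _ hz.1 _ hz.2, hl.hδ]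
  have hψc : ContinuousOn (fun z : ℝ × ℝ × ℝ => ψ z.1 z.2.1 z.2.2) (Icc a b ×ˢ Sbar) :=
    jet_contOn hl.hψ
  obtain ⟨S, c, hc1, hc2⟩ := approx_lemma hJc hJ1 (U := fun y => u (zT y).1 (zT y).2)
    (V := fun y => v (zT y).1 (zT y).2 + (ε * ψ (zT y).1 (zT y).2.1 (zT y).2.2 + θ))
    (cap := u z₀.1 z₀.2 + δ) (η := η)
    (hl.hu_usc.comp hzTc.continuousOn (fun y _ => hzTE y))
    ((hl.hv_lsc.comp hzTc.continuousOn (fun y _ => hzTE y)).add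
      (ContinuousOn.lowerSemicontinuousOn (((continuousOn_const.mul hψc).add continuousOn_const).comp
        hzTc.continuousOn (fun y _ => hzTE y))))
    hcap hη (fun y hy => ⟨hl.hu0 _ (hzTE y).1 _ (hzTE y).2, hl.hua _ (hzTE y) (hzTd y hy)⟩)
    (fun y hy => by have := hl.hmax _ (hzTE y); linarith)
  have hpos : ∀ z : ℝ × ℝ × ℝ, dist z z₀ ≤ ρ → 0 < z.2.2 := by
    intro z hz
    have := abs_le.1 (dist3_le.1 hz).2.2
    linarith [this.1]
  have hQ0 : ∀ t y : ℝ, t ≤ T → 0 ≤ 6 * σ ^ 2 * (T - t) * Yc μ σ T (Real.log z₀.2.2) t y ^ 2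
      + 3 * σ ^ 4 * (T - t) ^ 2 := by
    intro t y h
    have : 0 ≤ T - t := by linarith
    positivity
  have key := hl.clash (T := T) (η := η) hη (by linarith) (by linarith)
    (h := fun t x y => ∑ k ∈ S, c k * (Real.exp (-((k : ℝ) ^ 2 * (σ ^ 2 * (T - t))) / 2) *
      Real.cos (k * (Yc μ σ T (Real.log z₀.2.2) t y + 1))))
    (B := fun t x y => ((T - t) / s) ^ 2 + 16 / d ^ 4 * (Yc μ σ T (Real.log z₀.2.2) t y ^ 4 +
      6 * σ ^ 2 * (T - t) * Yc μ σ T (Real.log z₀.2.2) t y ^ 2 + 3 * σ ^ 4 * (T - t) ^ 2))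
    (P := fun t x y => (x * Real.exp (-(r * t)) - z₀.2.1 * Real.exp (-(r * z₀.1))) ^ 2)
    (fun z _ hd _ => jet_sum r μ σ T _ z.1 z.2.1 z.2.2 (hpos z hd) S c)
    (fun z _ hd h => ⟨_, by
      have : 0 ≤ T - z.1 := by linarith
      rw [mul_zero, add_zero]
      positivity, (jet_time2 r μ σ T s z.1 z.2.1 z.2.2).add
        ((jet_Q r μ σ T _ z.1 z.2.1 z.2.2 (hpos z hd)).const_mul (16 / d ^ 4))⟩)
    (fun z _ _ h => by
      have : 0 ≤ T - z.1 := by linarith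
      positivity)
    (fun z _ _ _ => ⟨_, le_rfl, jet_x r μ σ _ z.1 z.2.1 z.2.2⟩)
    (fun z _ _ _ => by positivity) (by simp)
    (fun z _ _ h => by
      have : 0 ≤ T - z.1 := by linarith
      exact heat_bound hc2 (by positivity) _) ?_ ?_
  · have hY : Yc μ σ T (Real.log z₀.2.2) z₀.1 z₀.2.2 = ν * τ := by
      simp [Yc, hT, hν]
    simp only [hY] at key
    rw [show T - z₀.1 = τ by simp [hT]] at key
    refine key.trans ?_
    have hA := hl.hA
    have hτ1 : τ ≤ 1 := by linarith
    have : (τ / s) ^ 2 + 16 / d ^ 4 * ((ν * τ) ^ 4 + 6 * σ ^ 2 * τ * (ν * τ) ^ 2 + 3 * σ ^ 4 * τ ^ 2)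
      ≤ (1 / s ^ 2 + 16 / d ^ 4 * (ν ^ 4 + 6 * σ ^ 2 * ν ^ 2 + 3 * σ ^ 4)) * τ ^ 2 := by
      have e1 : (ν * τ) ^ 4 ≤ ν ^ 4 * τ ^ 2 := by
        rw [mul_pow]
        exact mul_le_mul_of_nonneg_left (pow_le_pow_of_le_one hτ.le hτ1 (by norm_num)) (by positivity)
      have e2 : 6 * σ ^ 2 * τ * (ν * τ) ^ 2 ≤ 6 * σ ^ 2 * ν ^ 2 * τ ^ 2 := by
        have : τ ^ 3 ≤ τ ^ 2 := pow_le_pow_of_le_one hτ.le hτ1 (by norm_num)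
        calc 6 * σ ^ 2 * τ * (ν * τ) ^ 2 = 6 * σ ^ 2 * ν ^ 2 * τ ^ 3 := by ring
          _ ≤ _ := mul_le_mul_of_nonneg_left this (by positivity)
      have e3 := mul_le_mul_of_nonneg_left (add_le_add_left (add_le_add e1 e2) (3 * σ ^ 4 * τ ^ 2))
        (by positivity : 0 ≤ 16 / d ^ 4)
      have e4 : (τ / s) ^ 2 = 1 / s ^ 2 * τ ^ 2 := by rw [div_pow]; ring
      rw [e4]
      linarith
    have := mul_le_mul_of_nonneg_left this (by positivity : 0 ≤ 2 * A)
    linarith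
  all_goals
    intro z hzE hzd hzt hP
    have e1 : z.2.1 * Real.exp (-(r * z.1)) - z₀.2.1 * Real.exp (-(r * z₀.1)) = 0 :=
      pow_eq_zero_iff two_ne_zero |>.1 hP
    have e3 := x_of_P e1
  · have hz0 := hpos z hzd
    set y := Real.log z.2.2 - Real.log z₀.2.2 with hy
    have hye : z₀.2.2 * Real.exp y = z.2.2 := by
      rw [hy, Real.exp_sub, Real.exp_log hz0, Real.exp_log hx]; field_simp
    have hyJ : y ∈ J := by
      show |z₀.2.2 * Real.exp y - z₀.2.2| ≤ ρ
      rw [hye]; exact (dist3_le.1 hzd).2.2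
    have hzz : zT y = z := by
      refine Prod.ext hzt.symm (Prod.ext ?_ hye)
      rw [e3, hzt]; simp [hzT, hT]
    have := hc1 y hyJ
    rw [hzz] at this
    have hY : Yc μ σ T (Real.log z₀.2.2) z.1 z.2.2 = y := by
      rw [hzt]; simp [Yc, hy]
    simp only [hY]
    rw [hzt] at this ⊢
    simp only [sub_self, mul_zero, neg_zero, zero_div, Real.exp_zero, one_mul]
    exact ⟨this.1, by linarith [this.2]⟩
  · have hz0 := hpos z hzd.le
    have hq := hQ0 z.1 z.2.2 hzt
    set Y := Yc μ σ T (Real.log z₀.2.2) z.1 z.2.2 with hY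
    have hc0 : 0 < 16 / d ^ 4 := by positivity
    show 1 ≤ ((T - z.1) / s) ^ 2 + 16 / d ^ 4 * (Y ^ 4 + 6 * σ ^ 2 * (T - z.1) * Y ^ 2 +
      3 * σ ^ 4 * (T - z.1) ^ 2)
    by_cases h : |z.1 - z₀.1| < s
    · have h1 := dist3_eq hzd (h.trans hsρ) (by rw [e3]; exact hsx _ h)
      have h2 := log_gap hx hρ hρx h1
      rw [← hd] at h2
      have h3 : Real.log z.2.2 - Real.log z₀.2.2 = Y - ν * (T - z.1) := by
        simp only [hY, Yc, hν]; ring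
      rw [h3] at h2
      have h4 := abs_sub Y (ν * (T - z.1))
      have h5 : |ν * (T - z.1)| ≤ d / 2 := by
        rw [abs_mul, abs_of_nonneg (by linarith : 0 ≤ T - z.1)]
        have h6 := (abs_lt.1 h).1
        have : T - z.1 ≤ 2 * s := by linarith
        nlinarith [abs_nonneg ν]
      have h7 : d / 2 ≤ |Y| := by linarith
      have h8 : (d / 2) ^ 4 ≤ Y ^ 4 := by
        have := pow_le_pow_left₀ (by positivity) h7 4
        rwa [Even.pow_abs (by decide)] at this
      have h9 : 1 ≤ 16 / d ^ 4 * Y ^ 4 := by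
        calc (1:ℝ) = 16 / d ^ 4 * (d / 2) ^ 4 := by field_simp; norm_num
          _ ≤ _ := mul_le_mul_of_nonneg_left h8 hc0.le
      have := mul_nonneg hc0.le hq
      have h10 := sq_nonneg ((T - z.1) / s)
      rw [add_assoc (Y ^ 4), mul_add]
      linarith
    · push Not at h
      have : s ≤ T - z.1 := by
        rcases le_abs'.1 h with h | h <;> linarith
      have : 1 ≤ (T - z.1) / s := by rwa [le_div_iff₀ hs, one_mul]
      have h1 : 1 ≤ ((T - z.1) / s) ^ 2 := one_le_pow₀ this
      have h2 : 0 ≤ 16 / d ^ 4 * (Y ^ 4 + 6 * σ ^ 2 * (T - z.1) * Y ^ 2 +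
        3 * σ ^ 4 * (T - z.1) ^ 2) := by
        refine mul_nonneg hc0.le ?_
        have : 0 ≤ Y ^ 4 := by positivity
        linarith
      linarith

lemma good_delta {h : ℝ × ℝ × ℝ → EReal} {E : Set (ℝ × ℝ × ℝ)} {z₀ : ℝ × ℝ × ℝ} {V : ℝ}
    (hlt : (V : EReal) < lscEnv h E z₀) : ∃ δ, 0 < δ ∧ ∀ᶠ q in 𝓝[E] z₀, ∀ v : ℝ, v < V + 3 * δ →
      (v : EReal) < lscEnv h E q := by
  obtain ⟨m, h1, h2⟩ := EReal.lt_iff_exists_real_btwn.1 hlt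
  have h1' : V < m := by exact_mod_cast h1
  refine ⟨(m - V) / 3, by linarith, ?_⟩
  have h3 : ∀ᶠ q in 𝓝[E] z₀, (m : EReal) < h q := eventually_lt_of_lt_liminf h2
  have h4 := eventually_eventually_nhdsWithin.2 h3
  filter_upwards [h4] with q hq v hv
  have h5 : v < m := by linarith
  have h6 : (m : EReal) ≤ lscEnv h E q := le_liminf_of_le (h := hq.mono fun _ h => h.le)
  exact lt_of_lt_of_le (by exact_mod_cast h5) h6

lemma psi_ge {lam b t x y : ℝ} (hl : 0 ≤ lam) (ht : t ≤ b) (hx : 0 ≤ x) (hy : 0 ≤ y) :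
    1 + x + y ≤ Real.exp (lam * (b - t)) * (1 + x + y) := by
  have : 1 ≤ Real.exp (lam * (b - t)) := Real.one_le_exp (mul_nonneg hl (by linarith))
  nlinarith

lemma psi_jet_ge {r μ lam b t x y : ℝ} (hl : lam = |r| + |μ| + 1) (ht : t ≤ b) (hx : 0 ≤ x)
    (hy : 0 ≤ y) : 1 ≤ Real.exp (lam * (b - t)) * (lam * (1 + x + y) - r * x - μ * y) := by
  have hl0 : 0 ≤ lam := by rw [hl]; positivity
  have h1 : 1 ≤ Real.exp (lam * (b - t)) := Real.one_le_exp (mul_nonneg hl0 (by linarith))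
  have h2 : r * x ≤ |r| * x := mul_le_mul_of_nonneg_right (le_abs_self r) hx
  have h3 : μ * y ≤ |μ| * y := mul_le_mul_of_nonneg_right (le_abs_self μ) hy
  have h4 : 1 ≤ lam * (1 + x + y) - r * x - μ * y := by
    rw [hl]
    nlinarith [abs_nonneg r, abs_nonneg μ, mul_nonneg (abs_nonneg r) hy, mul_nonneg (abs_nonneg μ) hx]
  nlinarith

lemma eunorm_le {x : ℝ × ℝ} (hx : x ∈ Sbar) : 0 ≤ eunorm x ∧ eunorm x ≤ 1 + x.1 + x.2 := by
  have h1 : 0 ≤ x.1 := hx.1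
  have h2 : 0 ≤ x.2 := hx.2
  refine ⟨Real.sqrt_nonneg _, ?_⟩
  rw [eunorm, Real.sqrt_le_left (by linarith)]
  nlinarith [mul_nonneg h1 h2]

lemma growth {p c W ε : ℝ} (hp0 : 0 < p) (hp : p < 1) (hc : 0 < c) (hε : 0 < ε) :
    ∃ R : ℝ, 0 < R ∧ ∀ m, R < m → W + c * (1 + m ^ p) ≤ ε * m := by
  have h1 := tendsto_rpow_neg_atTop (show 0 < 1 - p by linarith)
  have h2 := h1.eventually (gt_mem_nhds (show (0:ℝ) < ε / (2 * c) by positivity))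
  have h3 := h2.and ((eventually_ge_atTop (2 * (W + c) / ε)).and (eventually_gt_atTop 0))
  obtain ⟨R, hR⟩ := eventually_atTop.1 h3
  refine ⟨max R 1, by positivity, fun m hm => ?_⟩
  obtain ⟨a1, a2, a3⟩ := hR m ((le_max_left _ _).trans hm.le)
  have e : m ^ p = m * m ^ (-(1 - p)) := by
    rw [show p = 1 + -(1 - p) by ring, Real.rpow_add a3, Real.rpow_one]
    congr 2; ring
  rw [div_le_iff₀ hε] at a2
  rw [lt_div_iff₀ (by positivity)] at a1
  rw [e]
  nlinarith

lemma main_aux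
    (C : ℝ → ℝ) (hC : IsCostFn C)
    (r μ σ : ℝ) (hσ : 0 < σ) (W p₀ c : ℝ) (hp₀ : 0 < p₀) (hp₁ : p₀ < 1) (hc : 0 < c)
    (a b : ℝ) (hab : a < b)
    (u v : ℝ → ℝ × ℝ → ℝ)
    (hu_usc : UpperSemicontinuousOn (fun p : ℝ × (ℝ × ℝ) => u p.1 p.2) (Icc a b ×ˢ Sbar))
    (hv_lsc : LowerSemicontinuousOn (fun p : ℝ × (ℝ × ℝ) => v p.1 p.2) (Icc a b ×ˢ Sbar))
    (hu : IsViscSubsol C r μ σ a b u)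
    (hv : IsViscSupersol C r μ σ a b v)
    (hu_bd : ∀ t ∈ Icc a b, ∀ x ∈ Sbar, 0 ≤ u t x ∧ u t x ≤ W)
    (hv_bd : ∀ t ∈ Icc a b, ∀ x ∈ Sbar, -(c * (1 + eunorm x ^ p₀)) ≤ v t x ∧ v t x ≤ W)
    (h0 : ∀ t ∈ Icc a b, u t (0, 0) ≤ v t (0, 0) ∧ v t (0, 0) = W)
    (hb : ∀ x ∈ Sbar, u b x ≤ v b x) :
    ∀ t ∈ Icc a b, ∀ x ∈ Sbar, u t x ≤ v t x := by
  by_contra! hcon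
  obtain ⟨t₁, ht₁, x₁, hx₁, hlt⟩ := hcon
  obtain ⟨lam, hlam⟩ : ∃ l, l = |r| + |μ| + 1 := ⟨_, rfl⟩
  have hlam0 : 0 ≤ lam := by rw [hlam]; positivity
  obtain ⟨ψ, hψd⟩ : ∃ ψ : ℝ → ℝ → ℝ → ℝ,
    ψ = fun t x y => Real.exp (lam * (b - t)) * (1 + x + y) := ⟨_, rfl⟩
  set E : Set (ℝ × ℝ × ℝ) := Icc a b ×ˢ Sbar with hE
  have hψge : ∀ z ∈ E, 1 + z.2.1 + z.2.2 ≤ ψ z.1 z.2.1 z.2.2 := fun z hz => by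
    rw [hψd]; exact psi_ge hlam0 hz.1.2 hz.2.1 hz.2.2
  have hψ : ∀ z ∈ E, ∃ l, 1 ≤ l ∧ Jet r μ σ ψ z l := fun z hz => by
    rw [hψd]
    exact ⟨_, psi_jet_ge hlam hz.1.2 hz.2.1 hz.2.2, jet_psi r μ σ lam b z.1 z.2.1 z.2.2⟩
  have hψc : Continuous (fun z : ℝ × ℝ × ℝ => ψ z.1 z.2.1 z.2.2) := by rw [hψd]; fun_prop
  have hψ1 : 0 < ψ t₁ x₁.1 x₁.2 := by
    have := hψge (t₁, x₁) ⟨ht₁, hx₁⟩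
    have h1 : 0 ≤ x₁.1 := hx₁.1
    have h2 : 0 ≤ x₁.2 := hx₁.2
    simp only at this
    linarith
  obtain ⟨ε, hεd⟩ : ∃ ε, ε = (u t₁ x₁ - v t₁ x₁) / (2 * ψ t₁ x₁.1 x₁.2) := ⟨_, rfl⟩
  have hε : 0 < ε := by rw [hεd]; apply div_pos <;> linarith
  have hf1 : 0 < u t₁ x₁ - v t₁ x₁ - ε * ψ t₁ x₁.1 x₁.2 := by
    have : ε * ψ t₁ x₁.1 x₁.2 = (u t₁ x₁ - v t₁ x₁) / 2 := by rw [hεd]; field_simp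
    rw [this]; linarith
  have hW : ∀ t ∈ Icc a b, ∀ x ∈ Sbar, u t x ≤ W := fun t ht x hx => (hu_bd t ht x hx).2
  have hL : ∀ t ∈ Icc a b, ∀ x ∈ Sbar, -((2 * c) * (1 + x.1 + x.2)) ≤ v t x := by
    intro t ht x hx
    obtain ⟨e1, e2⟩ := eunorm_le hx
    have h1 : 0 ≤ x.1 := hx.1
    have h2 : 0 ≤ x.2 := hx.2
    have h3 : eunorm x ^ p₀ ≤ 1 + x.1 + x.2 :=
      calc eunorm x ^ p₀ ≤ (1 + x.1 + x.2) ^ p₀ := Real.rpow_le_rpow e1 e2 hp₀.le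
        _ ≤ (1 + x.1 + x.2) ^ (1:ℝ) := Real.rpow_le_rpow_of_exponent_le (by linarith) hp₁.le
        _ = _ := Real.rpow_one _
    have := (hv_bd t ht x hx).1
    nlinarith
  -- maximum point
  obtain ⟨z₀, hz₀, hpos, hmax⟩ : ∃ z₀ ∈ E, 0 < u z₀.1 z₀.2 - v z₀.1 z₀.2 - ε * ψ z₀.1 z₀.2.1 z₀.2.2 ∧
      ∀ z ∈ E, u z.1 z.2 - v z.1 z.2 - ε * ψ z.1 z.2.1 z.2.2 ≤
        u z₀.1 z₀.2 - v z₀.1 z₀.2 - ε * ψ z₀.1 z₀.2.1 z₀.2.2 := by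
    obtain ⟨R, hR0, hR⟩ := growth (W := W) hp₀ hp₁ hc hε
    have hout : ∀ z ∈ E, z ∉ Icc a b ×ˢ (Icc 0 R ×ˢ Icc 0 R) →
        u z.1 z.2 - v z.1 z.2 - ε * ψ z.1 z.2.1 z.2.2 ≤ 0 := by
      intro z hz hzn
      have h1 : 0 ≤ z.2.1 := hz.2.1
      have h2 : 0 ≤ z.2.2 := hz.2.2
      have h3 : R < 1 + z.2.1 + z.2.2 := by
        by_contra! h
        exact hzn ⟨hz.1, ⟨h1, by linarith⟩, ⟨h2, by linarith⟩⟩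
      obtain ⟨e1, e2⟩ := eunorm_le hz.2
      have h4 := Real.rpow_le_rpow e1 e2 hp₀.le
      have h5 := hR _ h3
      have h6 := (hv_bd _ hz.1 _ hz.2).1
      have h7 := hW _ hz.1 _ hz.2
      have h8 := mul_le_mul_of_nonneg_left (hψge z hz) hε.le
      have h9 := mul_le_mul_of_nonneg_left h4 hc.le
      linarith
    have hK0E : Icc a b ×ˢ (Icc 0 R ×ˢ Icc 0 R) ⊆ E := fun z hz => ⟨hz.1, hz.2.1.1, hz.2.2.1⟩
    have hK0 : IsCompact (Icc a b ×ˢ (Icc 0 R ×ˢ Icc 0 R)) :=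
      isCompact_Icc.prod (isCompact_Icc.prod isCompact_Icc)
    have hz1 : (t₁, x₁) ∈ Icc a b ×ˢ (Icc 0 R ×ˢ Icc 0 R) := by
      by_contra h
      have := hout (t₁, x₁) ⟨ht₁, hx₁⟩ h
      simp only at this
      linarith
    have hv' : UpperSemicontinuousOn (fun p : ℝ × (ℝ × ℝ) => -v p.1 p.2) E := by
      have := continuous_neg.comp_lowerSemicontinuousOn_antitone hv_lsc (fun x y h => neg_le_neg h)
      exact this
    have hf : UpperSemicontinuousOn (fun z : ℝ × ℝ × ℝ => (u z.1 z.2 + -v z.1 z.2) +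
        -(ε * ψ z.1 z.2.1 z.2.2)) E :=
      (hu_usc.add hv').add (ContinuousOn.upperSemicontinuousOn
        ((continuous_const.mul hψc).neg.continuousOn))
    obtain ⟨z, hz, hm⟩ := (hf.mono hK0E).exists_isMaxOn ⟨_, hz1⟩ hK0
    have hm' : ∀ q ∈ Icc a b ×ˢ (Icc 0 R ×ˢ Icc 0 R), (u q.1 q.2 + -v q.1 q.2) +
        -(ε * ψ q.1 q.2.1 q.2.2) ≤ (u z.1 z.2 + -v z.1 z.2) + -(ε * ψ z.1 z.2.1 z.2.2) :=
      fun q hq => hm hq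
    have hp := hm' _ hz1
    simp only at hp
    refine ⟨z, hK0E hz, by linarith, fun q hq => ?_⟩
    by_cases h : q ∈ Icc a b ×ˢ (Icc 0 R ×ˢ Icc 0 R)
    · have := hm' q h; linarith
    · have := hout q hq h; linarith
  have hψ0 : 0 < ψ z₀.1 z₀.2.1 z₀.2.2 := by
    have := hψge z₀ hz₀
    have h1 : 0 ≤ z₀.2.1 := hz₀.2.1
    have h2 : 0 ≤ z₀.2.2 := hz₀.2.2
    linarith
  have hεψ := mul_pos hε hψ0
  have hzb : z₀.1 < b := by
    refine lt_of_le_of_ne hz₀.1.2 fun h => ?_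
    have := hb _ hz₀.2
    rw [← h] at this; linarith
  have hzne : z₀.2 ≠ (0, 0) := by
    intro h
    have := (h0 _ hz₀.1).1
    rw [← h] at this; linarith
  -- domain neighbourhood
  obtain ⟨ρ₁, hρ₁, hdom⟩ : ∃ ρ > 0, ∀ z ∈ E, dist z z₀ ≤ ρ → z ∈ domI a b := by
    have o1 : ∀ᶠ q : ℝ × ℝ × ℝ in 𝓝 z₀, q.1 < b ∧ q.2 ≠ (0, 0) := by
      have e1 : IsOpen {q : ℝ × ℝ × ℝ | q.1 < b} := isOpen_lt (by fun_prop) (by fun_prop)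
      have e2 : IsOpen {q : ℝ × ℝ × ℝ | q.2 ≠ (0, 0)} := isOpen_ne_fun (by fun_prop) (by fun_prop)
      exact Filter.Eventually.and (e1.mem_nhds hzb) (e2.mem_nhds hzne)
    obtain ⟨ρ, h1, h2⟩ := Metric.nhds_basis_closedBall.eventually_iff.1 o1
    refine ⟨ρ, h1, fun z hz hd => ?_⟩
    have := h2 (Metric.mem_closedBall.2 hd)
    exact ⟨hz.1.1, this.1, hz.2, this.2⟩
  have hEc : IsClosed E := isClosed_Icc.prod Sbar_closed
  -- impulse step
  have himp : (v z₀.1 z₀.2 : EReal) < lscEnv (MopF C v) E z₀ := by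
    by_contra! hle
    obtain ⟨d, hd, hvd⟩ := super_imp hC hv_lsc hz₀ hle
    have hne : Gam C z₀.2 d ≠ (0, 0) := by
      intro h
      rw [h, (h0 _ hz₀.1).2] at hvd
      have := hW _ hz₀.1 _ hz₀.2
      linarith
    have hKc : IsCompact (Metric.closedBall z₀ ρ₁ ∩ E) := (isCompact_closedBall z₀ ρ₁).inter_right hEc
    have h1 := sub_obstacle hu hW hu_usc hKc (fun z hz => hdom z hz.2 hz.1) (z₀ := z₀)
      ⟨by simp [hρ₁.le], hz₀⟩ hρ₁ (fun q hq hd => ⟨Metric.mem_closedBall.2 hd.le, domI_sub hq⟩)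
    have h2 := h1.trans (sub_imp hC hu_usc hz₀ hd hne)
    have h3 : u z₀.1 z₀.2 ≤ u z₀.1 (Gam C z₀.2 d) := by exact_mod_cast h2
    have h4 := hmax (z₀.1, Gam C z₀.2 d) ⟨hz₀.1, hd⟩
    have h5 : ψ z₀.1 (Gam C z₀.2 d).1 (Gam C z₀.2 d).2 < ψ z₀.1 z₀.2.1 z₀.2.2 := by
      rw [hψd]
      have := C_pos hC d
      refine mul_lt_mul_of_pos_left ?_ (Real.exp_pos _)
      simp only [Gam]; linarith
    have h6 := mul_lt_mul_of_pos_left h5 hε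
    simp only at h4
    linarith
  obtain ⟨δ, hδ, hδv⟩ := good_delta himp
  -- choose radius
  have ev : ∀ᶠ q in 𝓝[E] z₀, u q.1 q.2 < u z₀.1 z₀.2 + δ ∧ v z₀.1 z₀.2 - 1 < v q.1 q.2 ∧
      ε * ψ z₀.1 z₀.2.1 z₀.2.2 - δ < ε * ψ q.1 q.2.1 q.2.2 ∧ ∀ w : ℝ, w < v z₀.1 z₀.2 + 3 * δ →
      (w : EReal) < lscEnv (MopF C v) E q := by
    have e1 := hu_usc z₀ hz₀ (u z₀.1 z₀.2 + δ) (by linarith)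
    have e2 := hv_lsc z₀ hz₀ (v z₀.1 z₀.2 - 1) (by linarith)
    have e3 : ∀ᶠ q : ℝ × ℝ × ℝ in 𝓝 z₀, ε * ψ z₀.1 z₀.2.1 z₀.2.2 - δ < ε * ψ q.1 q.2.1 q.2.2 :=
      by
      have o : IsOpen {q : ℝ × ℝ × ℝ | ε * ψ z₀.1 z₀.2.1 z₀.2.2 - δ < ε * ψ q.1 q.2.1 q.2.2} :=
        isOpen_lt continuous_const (continuous_const.mul hψc)
      refine o.mem_nhds ?_
      show ε * ψ z₀.1 z₀.2.1 z₀.2.2 - δ < ε * ψ z₀.1 z₀.2.1 z₀.2.2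
      linarith
    exact e1.and (e2.and ((e3.filter_mono nhdsWithin_le_nhds).and hδv))
  rw [eventually_nhdsWithin_iff] at ev
  obtain ⟨ρ₂, hρ₂, ev2⟩ := Metric.nhds_basis_closedBall.eventually_iff.1 ev
  have hx1 : 0 ≤ z₀.2.2 := hz₀.2.2
  obtain ⟨m, hm, hmx⟩ : ∃ m, 0 < m ∧ (0 < z₀.2.2 → m ≤ z₀.2.2 / 2) := by
    rcases hx1.eq_or_lt with h | h
    · exact ⟨1, one_pos, fun h' => by linarith⟩
    · exact ⟨z₀.2.2 / 2, by linarith, fun _ => le_rfl⟩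
  have hbz : 0 < (b - z₀.1) / 2 := by linarith
  obtain ⟨ρ, hρ, q1, q2, q3, q4, q5⟩ : ∃ ρ, 0 < ρ ∧ ρ ≤ ρ₁ ∧ ρ ≤ ρ₂ ∧ ρ ≤ m ∧ ρ ≤ (b - z₀.1) / 2 ∧
      ρ ≤ δ / ε := by
    have h5 : 0 < δ / ε := div_pos hδ hε
    refine ⟨min (min ρ₁ ρ₂) (min m (min ((b - z₀.1) / 2) (δ / ε))), ?_, ?_, ?_, ?_, ?_, ?_⟩
    · exact lt_min (lt_min hρ₁ hρ₂) (lt_min hm (lt_min hbz h5))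
    · exact (min_le_left _ _).trans (min_le_left _ _)
    · exact (min_le_left _ _).trans (min_le_right _ _)
    · exact (min_le_right _ _).trans (min_le_left _ _)
    · exact (min_le_right _ _).trans ((min_le_right _ _).trans (min_le_left _ _))
    · exact (min_le_right _ _).trans ((min_le_right _ _).trans (min_le_right _ _))
  have ev3 : ∀ z ∈ E, dist z z₀ ≤ ρ → _ := fun z hz hd =>
    ev2 (Metric.mem_closedBall.2 (hd.trans q2)) hz
  have hu0 := (hu_bd _ hz₀.1 _ hz₀.2).1
  have hloc : Loc C r μ σ a b W (2 * c) u v ψ z₀ ε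
      (u z₀.1 z₀.2 - v z₀.1 z₀.2 - ε * ψ z₀.1 z₀.2.1 z₀.2.2) δ (u z₀.1 z₀.2 + 4 * δ + 2)
      (1 - v z₀.1 z₀.2) ρ :=
    { hu := hu
      hW := hW
      hu0 := fun t ht x hx => (hu_bd t ht x hx).1
      hu_usc := hu_usc
      hv := hv
      hL := hL
      hv_lsc := hv_lsc
      hz₀ := hz₀
      hε := hε
      hδ := hδ
      hρ := hρ
      hb := by linarith
      hερ := by rw [le_div_iff₀ hε] at q5; linarith
      hθ := rfl
      hmax := fun z hz => by have := hmax z hz; linarith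
      hψ := hψ
      hdom := fun z hz hd => hdom z hz (hd.trans q1)
      hua := fun z hz hd => (ev3 z hz hd).1.le
      hψa := fun z hz hd => (ev3 z hz hd).2.2.1.le
      hva := fun z hz hd h => (ev3 z hz hd).2.2.2 _ h
      hvb := fun z hz hd => by have := (ev3 z hz hd).2.1; linarith
      hA := by linarith
      hA1 := by linarith
      hA2 := by linarith }
  rcases hx1.eq_or_lt with h | h
  · exact case_zero hloc h.symm
  · exact case_pos hloc h (q3.trans (hmx h))

/-- (Proposition: parabolic comparison principle on a goal interval.) -/
theorem parabolic_comparison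
    (C : ℝ → ℝ) (hC : IsCostFn C)
    (r μ σ : ℝ) (hσ : 0 < σ)
    (K k : ℕ) (hK : 1 ≤ K) (hk1 : 1 ≤ k) (hkK : k ≤ K)
    (w G : ℕ → ℝ)
    (hw : ∀ i, k ≤ i → i ≤ K → 0 < w i) (hG : ∀ i, k ≤ i → i ≤ K → 0 < G i)
    (p₀ c : ℝ) (hp₀ : 0 < p₀) (hp₁ : p₀ < 1) (hc : 0 < c)
    (a b : ℝ) (hab : a < b)
    (u v : ℝ → ℝ × ℝ → ℝ)
    (hu_usc : UpperSemicontinuousOn (fun p : ℝ × (ℝ × ℝ) => u p.1 p.2)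
      (Set.Icc a b ×ˢ Sbar))
    (hv_lsc : LowerSemicontinuousOn (fun p : ℝ × (ℝ × ℝ) => v p.1 p.2)
      (Set.Icc a b ×ˢ Sbar))
    (hu_sub : IsViscSubsol C r μ σ a b u)
    (hv_super : IsViscSupersol C r μ σ a b v)
    (hu_bd : ∀ t ∈ Set.Icc a b, ∀ x ∈ Sbar,
      0 ≤ u t x ∧ u t x ≤ ∑ i ∈ Finset.Icc k K, w i * G i)
    (hv_bd : ∀ t ∈ Set.Icc a b, ∀ x ∈ Sbar,
      -(c * (1 + eunorm x ^ p₀)) ≤ v t x ∧ v t x ≤ ∑ i ∈ Finset.Icc k K, w i * G i)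
    (h0 : ∀ t ∈ Set.Icc a b,
      u t (0, 0) ≤ v t (0, 0) ∧ v t (0, 0) = ∑ i ∈ Finset.Icc k K, w i * G i)
    (hb : ∀ x ∈ Sbar, u b x ≤ v b x) :
    ∀ t ∈ Set.Icc a b, ∀ x ∈ Sbar, u t x ≤ v t x := by
  exact main_aux C hC r μ σ hσ _ p₀ c hp₀ hp₁ hc a b hab u v hu_usc hv_lsc hu_sub hv_super hu_bd hv_bd h0 hb
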